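/- arXiv:1906.04417 — 3 statements merged into one kernel-verified Lean document; each statement's English description precedes it below -/
import Mathlib

section
/- Let f_1, ..., f_n ∈ L^1([0,1]; ℝ). Then there exist points 0 = t_0 ≤ t_1 ≤ ... ≤ t_{n+1} = 1 such that the function h : [0,1] → {−1, +1} defined by h(x) = (−1)^k for x ∈ [t_k, t_{k+1}) (and h(1) = (−1)^n) satisfies ∫_0^1 f_j(x) h(x) dx = 0 for all j = 1, ..., n. (Hobby–Rice theorem: h takes values ±1 and has at most n sign changes.) -/
open MeasureTheory

def altL : ℕ → List ℕ → ZMod 2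
  | _, [] => 1
  | b, c :: l => if (c + b) % 2 = 0 then altL (b + 1) l else 0

lemma altL_add_two (l : List ℕ) : ∀ b, altL (b + 2) l = altL b l := by
  induction l with
  | nil => intro b; rfl
  | cons c l ih =>
    intro b
    have h : (c + (b + 2)) % 2 = (c + b) % 2 := by omega
    simp only [altL, h]
    rw [show b + 2 + 1 = (b + 1) + 2 by ring, ih]

lemma altL_door (l : List ℕ) (hl : l.Pairwise (· ≤ ·)) : ∀ b,
    (l.map (fun x => altL b (l.erase x))).sum = altL b l + altL (b + 1) l := by
  induction l with
  | nil => intro b; simp [altL]; decide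
  | cons c l ih =>
    intro b
    have hl' := hl
    rw [List.pairwise_cons] at hl
    have key : l.map (fun x => altL b ((c :: l).erase x))
        = l.map (fun x => if (c + b) % 2 = 0 then altL (b + 1) (l.erase x) else 0) := by
      apply List.map_congr_left
      intro x hx
      have : (c :: l).erase x = c :: l.erase x := by
        have hp : ((c :: l).erase x).Perm (c :: l.erase x) := by
          by_cases hcx : c = x
          · subst hcx
            rw [List.erase_cons_head]
            exact List.perm_cons_erase hx
          · rw [List.erase_cons_tail (by simpa using hcx)]
        refine hp.eq_of_pairwise (fun a b _ _ h1 h2 => le_antisymm h1 h2) (hl'.sublist (List.erase_sublist)) ?_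
        rw [List.pairwise_cons]
        exact ⟨fun a ha => hl.1 a (List.mem_of_mem_erase ha), hl.2.sublist List.erase_sublist⟩
      rw [this, altL]
    rw [List.map_cons, List.sum_cons, key, List.erase_cons_head]
    simp only [altL]
    by_cases h : (c + b) % 2 = 0
    · have h2 : ¬ (c + (b + 1)) % 2 = 0 := by omega
      simp only [h, h2, if_true, if_false]
      rw [ih hl.2, altL_add_two]
      generalize altL b l = u
      generalize altL (b+1) l = w
      revert u w; decide
    · have h2 : (c + (b + 1)) % 2 = 0 := by omega
      simp only [h, h2, if_true, if_false, altL_add_two]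
      simp

noncomputable def altM (b : ℕ) (s : Multiset ℕ) : ZMod 2 := altL b (s.sort (· ≤ ·))

lemma altM_door (b : ℕ) (s : Multiset ℕ) :
    (s.map (fun x => altM b (s.erase x))).sum = altM b s + altM (b + 1) s := by
  unfold altM
  rw [← altL_door _ (Multiset.pairwise_sort s (· ≤ ·))]
  conv_lhs => rw [← Multiset.sort_eq s (· ≤ ·)]
  rw [Multiset.map_coe, Multiset.sum_coe]
  congr 1
  apply List.map_congr_left
  intro x hx
  congr 1
  refine List.Perm.eq_of_pairwise (le := (· ≤ ·)) (fun a b _ _ h1 h2 => le_antisymm h1 h2) (Multiset.pairwise_sort _ _) ((Multiset.pairwise_sort s (· ≤ ·)).sublist List.erase_sublist) ?_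
  rw [← Multiset.coe_eq_coe, Multiset.sort_eq, ← Multiset.coe_erase, Multiset.sort_eq]

def ngl (a : ℕ) : ℕ := if a % 2 = 0 then a + 1 else a - 1

lemma altL_ngl (l : List ℕ) : ∀ b, altL b (l.map ngl) = altL (b + 1) l := by
  induction l with
  | nil => intro b; rfl
  | cons c l ih =>
    intro b
    have h : (ngl c + b) % 2 = (c + (b + 1)) % 2 := by unfold ngl; split_ifs <;> omega
    simp only [List.map_cons, altL, h, ih]

lemma altM_ngl (b : ℕ) (s : Multiset ℕ) (hs : ∀ x ∈ s, ∀ y ∈ s, x / 2 = y / 2 → x = y) :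
    altM b (s.map ngl) = altM (b + 1) s := by
  unfold altM
  rw [← altL_ngl]
  congr 1
  refine List.Perm.eq_of_pairwise (le := (· ≤ ·)) (fun a b _ _ h1 h2 => le_antisymm h1 h2) (Multiset.pairwise_sort _ _) ?_ ?_
  · rw [List.pairwise_map]
    refine (Multiset.pairwise_sort s (· ≤ ·)).imp_of_mem ?_
    intro x y hx hy hxy
    have := hs x (by simpa using hx) y (by simpa using hy)
    unfold ngl
    split_ifs <;> omega
  · rw [← Multiset.coe_eq_coe, Multiset.sort_eq, ← Multiset.map_coe, Multiset.sort_eq]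

lemma altL_bound (l : List ℕ) : ∀ b M a, l.Pairwise (· ≤ ·) →
    (∀ x ∈ l, ∀ y ∈ l, x / 2 = y / 2 → x = y) → (∀ x ∈ l, x < 2 * M) → (∀ x ∈ l, 2 * a ≤ x) →
    altL b l ≠ 0 → l = [] ∨ l.length + a ≤ M := by
  induction l with
  | nil => intros; left; rfl
  | cons c l ih =>
    intro b M a hp hc hM ha h
    right
    simp only [altL] at h
    split_ifs at h with h0
    · rw [List.pairwise_cons] at hp
      have h1 := hM c (by simp)
      have h2 := ha c (by simp)
      have hgt : ∀ x ∈ l, 2 * (a + 1) ≤ x := by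
        cases l with
        | nil => simp
        | cons d l =>
          simp only [altL] at h
          split_ifs at h with h3
          · have h4 := hp.1 d (by simp)
            have h5 := hc c (by simp) d (by simp)
            have h6 : 2 * (a + 1) ≤ d := by omega
            rw [List.pairwise_cons] at hp
            intro x hx
            rcases List.mem_cons.1 hx with rfl | hx
            · exact h6
            · exact h6.trans (hp.2.1 x hx)
          · simp at h
      rcases ih (b + 1) M (a + 1) hp.2 (fun x hx y hy => hc x (by simp [hx]) y (by simp [hy])) (fun x hx => hM x (by simp [hx])) hgt h with h7 | h7
      · subst h7; simp; omega
      · simp; omega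
    · simp at h

section tucker
variable {N : ℕ}

abbrev SFlag (N : ℕ) := Equiv.Perm (Fin N) × (Fin N → SignType)

/-- levels -/
def lev (s : SFlag N) (r : ℕ) : Fin N → SignType :=
  fun i => if (s.1.symm i : ℕ) ≤ r then s.2 i else 0

open Classical in
noncomputable def SS (N k : ℕ) : Finset (SFlag N) :=
  Finset.univ.filter (fun s => (∀ i, s.2 i ≠ 0) ∧ ∀ i : Fin N, k ≤ (i : ℕ) → s.1 i = i ∧ s.2 i = 1)

noncomputable def lab (lam : (Fin N → SignType) → ℕ) (k : ℕ) (s : SFlag N) : Multiset ℕ :=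
  (Multiset.range k).map (fun r => lam (lev s r))

lemma SS_symm {k : ℕ} {s : SFlag N} (hs : s ∈ SS N k) (i : Fin N) (h : (s.1.symm i : ℕ) < k) : (i : ℕ) < k := by
  by_contra hh
  simp only [SS, Finset.mem_filter] at hs
  have := (hs.2.2 i (by omega)).1
  have h2 : s.1.symm i = i := by rw [Equiv.symm_apply_eq]; exact this.symm
  rw [h2] at h; omega

lemma SS_lt {k : ℕ} {s : SFlag N} (hs : s ∈ SS N k) (i : Fin N) (h : (i : ℕ) < k) : (s.1 i : ℕ) < k := by
  by_contra hh
  simp only [SS, Finset.mem_filter] at hs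
  have := (hs.2.2 (s.1 i) (by omega)).1
  have h2 := s.1.injective this
  rw [h2] at hh; omega

lemma lev_ne {k : ℕ} {s : SFlag N} (hs : s ∈ SS N k) (hN : 0 < N) (r : ℕ) : lev s r ≠ 0 := by
  intro h
  have := congrFun h (s.1 ⟨0, hN⟩)
  simp only [SS, Finset.mem_filter] at hs
  simp [lev] at this
  exact hs.2.1 _ this

lemma lev_mono (s : SFlag N) {r r' : ℕ} (h : r ≤ r') (i : Fin N) : lev s r i = 0 ∨ lev s r i = lev s r' i := by
  unfold lev
  split_ifs <;> first | omega | simp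

lemma lab_compl (lam : (Fin N → SignType) → ℕ) (hN : 0 < N)
    (hc : ∀ x y, x ≠ 0 → (∀ i, x i = 0 ∨ x i = y i) → lam x / 2 = lam y / 2 → lam x = lam y)
    {k : ℕ} {s : SFlag N} (hs : s ∈ SS N k) (m : ℕ) :
    ∀ x ∈ lab lam m s, ∀ y ∈ lab lam m s, x / 2 = y / 2 → x = y := by
  intro x hx y hy h
  simp only [lab, Multiset.mem_map] at hx hy
  obtain ⟨a, -, rfl⟩ := hx
  obtain ⟨b, -, rfl⟩ := hy
  rcases le_total a b with hab | hab
  · exact hc _ _ (lev_ne hs hN a) (lev_mono s hab) h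
  · exact (hc _ _ (lev_ne hs hN b) (lev_mono s hab) h.symm).symm

noncomputable def HH (N : ℕ) (k : Fin N) : Finset (SFlag N) := (SS N (k+1)).filter (fun s => s.2 k = 1)

def flp (k : Fin N) (s : SFlag N) : SFlag N := (s.1, fun i => if i ≤ k then - s.2 i else s.2 i)

lemma flp_mem (k : Fin N) {s : SFlag N} (hs : s ∈ SS N (k+1)) : flp k s ∈ SS N (k+1) := by
  simp only [SS, Finset.mem_filter, Finset.mem_univ, true_and, flp] at hs ⊢
  refine ⟨fun i => ?_, fun i hi => ⟨(hs.2 i hi).1, ?_⟩⟩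
  · have := hs.1 i
    split_ifs
    · simpa using this
    · exact this
  · rw [if_neg]
    · exact (hs.2 i hi).2
    · rw [Fin.le_def]; omega

lemma lev_flp (k : Fin N) {s : SFlag N} (hs : s ∈ SS N (k+1)) {r : ℕ} (hr : r < k + 1) :
    lev (flp k s) r = - lev s r := by
  funext i
  simp only [lev, flp, Pi.neg_apply]
  by_cases h1 : (s.1.symm i : ℕ) ≤ r
  · have h3 := SS_symm hs i (by omega)
    have h2 : i ≤ k := by rw [Fin.le_def]; omega
    simp only [h1, h2, if_true]
  · simp only [h1, if_false]
    rfl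

lemma flp_flp (k : Fin N) (s : SFlag N) : flp k (flp k s) = s := by
  unfold flp
  ext i
  · rfl
  · simp only
    split_ifs <;> simp

lemma sum_hemi (lam : (Fin N → SignType) → ℕ) (hN : 0 < N)
    (hodd : ∀ x, x ≠ 0 → lam (-x) = ngl (lam x))
    (hc : ∀ x y, x ≠ 0 → (∀ i, x i = 0 ∨ x i = y i) → lam x / 2 = lam y / 2 → lam x = lam y)
    (k : Fin N) :
    ∑ s ∈ SS N (k+1), altM 0 (lab lam (k+1) s) =
      ∑ s ∈ HH N k, (altM 0 (lab lam (k+1) s) + altM 1 (lab lam (k+1) s)) := by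
  rw [Finset.sum_add_distrib, HH, ← Finset.sum_filter_add_sum_filter_not (SS N (k+1)) (fun s => s.2 k = 1)]
  congr 1
  have hh : ∀ s ∈ SS N (k+1), (s.2 k = 1 ↔ ¬ (flp k s).2 k = 1) := by
    intro s hs
    simp only [SS, Finset.mem_filter] at hs
    have := hs.2.1 k
    simp only [flp, le_refl, if_true]
    revert this
    generalize s.2 k = u
    revert u; decide
  refine Finset.sum_bij' (fun s _ => flp k s) (fun s _ => flp k s) ?_ ?_ ?_ ?_ ?_
  · intro s hs
    simp only [Finset.mem_filter] at hs ⊢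
    refine ⟨flp_mem k hs.1, ?_⟩
    have := hh s hs.1
    tauto
  · intro s hs
    simp only [Finset.mem_filter] at hs ⊢
    exact ⟨flp_mem k hs.1, (hh s hs.1).1 hs.2⟩
  · intros; apply flp_flp
  · intros; apply flp_flp
  · intro s hs
    simp only [Finset.mem_filter] at hs
    have hs' := flp_mem k hs.1
    rw [← altM_ngl 0 _ (lab_compl lam hN hc hs' _)]
    congr 1
    simp only [lab, Multiset.map_map]
    apply Multiset.map_congr rfl
    intro r hr
    rw [Multiset.mem_range] at hr
    simp only [Function.comp]
    rw [lev_flp k hs.1 hr, hodd _ (lev_ne hs.1 hN r)]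
    unfold ngl; split_ifs <;> omega

lemma lab_erase (lam : (Fin N → SignType) → ℕ) (m r : ℕ) (hr : r < m) (s : SFlag N) :
    (lab lam m s).erase (lam (lev s r)) = ((Multiset.range m).erase r).map (fun r => lam (lev s r)) := by
  unfold lab
  rw [Multiset.map_erase_of_mem]
  simpa using hr

lemma erase_congr (lam : (Fin N → SignType) → ℕ) (m r : ℕ) (s s' : SFlag N)
    (h : ∀ q, q < m → q ≠ r → lev s q = lev s' q) :
    ((Multiset.range m).erase r).map (fun r => lam (lev s r)) = ((Multiset.range m).erase r).map (fun r => lam (lev s' r)) := by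
  apply Multiset.map_congr rfl
  intro q hq
  rw [Multiset.Nodup.mem_erase_iff (Multiset.nodup_range m)] at hq
  rw [h q (by simpa using hq.2) hq.1]

lemma sum_inn (lam : (Fin N → SignType) → ℕ) (k : Fin N) (r : ℕ) (hr : r < k) :
    ∑ s ∈ HH N k, altM 0 ((lab lam (k+1) s).erase (lam (lev s r))) = 0 := by
  have hr1 : r < N := by omega
  have hr2 : r + 1 < N := by omega
  set a : Fin N := ⟨r, hr1⟩ with ha
  set b : Fin N := ⟨r + 1, hr2⟩ with hb
  have hab : a ≠ b := by simp [ha, hb]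
  refine Finset.sum_involution (fun s _ => ((s.1 * Equiv.swap a b, s.2) : SFlag N)) ?_ ?_ ?_ ?_
  · intro s hs
    rw [lab_erase _ _ _ (by omega), lab_erase _ _ _ (by omega)]
    rw [erase_congr lam (k+1) r s (s.1 * Equiv.swap a b, s.2)]
    · exact CharTwo.add_self_eq_zero _
    · intro q hq hqr
      funext i
      simp only [lev]
      have : ((s.1 * Equiv.swap a b).symm i : ℕ) ≤ q ↔ (s.1.symm i : ℕ) ≤ q := by
        have : (s.1 * Equiv.swap a b).symm i = Equiv.swap a b (s.1.symm i) := by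
          rw [Equiv.symm_apply_eq]; simp
        rw [this]
        generalize s.1.symm i = j
        rw [Equiv.swap_apply_def]
        split_ifs with h1 h2
        · subst h1; simp [ha, hb]; omega
        · subst h2; simp [ha, hb]; omega
        · rfl
      simp only [this]
  · intro s hs _ h
    have := congrArg (fun t : SFlag N => t.1 a) h
    simp at this
    exact hab this.symm
  · intro s hs
    simp only [HH, SS, Finset.mem_filter, Finset.mem_univ, true_and] at hs ⊢
    refine ⟨⟨hs.1.1, fun i hi => ⟨?_, (hs.1.2 i hi).2⟩⟩, hs.2⟩
    rw [Equiv.Perm.mul_apply, Equiv.swap_apply_of_ne_of_ne]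
    · exact (hs.1.2 i hi).1
    · intro h; simp [h, ha] at hi; omega
    · intro h; simp [h, hb] at hi; omega
  · intro s hs
    ext i <;> simp

lemma sum_last (lam : (Fin N → SignType) → ℕ) (k : Fin N) :
    ∑ s ∈ HH N k, altM 0 ((lab lam (k+1) s).erase (lam (lev s k))) = ∑ s ∈ SS N k, altM 0 (lab lam k s) := by
  have hlab : ∀ s : SFlag N, (lab lam (k+1) s).erase (lam (lev s k)) = lab lam k s := by
    intro s
    unfold lab
    rw [Multiset.range_succ, Multiset.map_cons, Multiset.erase_cons_head]
  simp only [hlab]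
  rw [← Finset.sum_filter_add_sum_filter_not (HH N k) (fun s => s.1 k = k)]
  have h1 : (HH N k).filter (fun s => s.1 k = k) = SS N k := by
    ext s
    simp only [HH, SS, Finset.mem_filter, Finset.mem_univ, true_and]
    constructor
    · rintro ⟨⟨⟨h1, h2⟩, h3⟩, h4⟩
      refine ⟨h1, fun i hi => ?_⟩
      rcases Nat.eq_or_lt_of_le hi with h | h
      · have : i = k := Fin.ext h.symm
        subst this; exact ⟨h4, h3⟩
      · exact h2 i h
    · rintro ⟨h1, h2⟩
      exact ⟨⟨⟨h1, fun i hi => h2 i (by omega)⟩, (h2 k le_rfl).2⟩, (h2 k le_rfl).1⟩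
  rw [h1]
  refine add_eq_left.2 ?_
  refine Finset.sum_involution (fun s _ => ((s.1, fun i => if i = s.1 k then - s.2 i else s.2 i) : SFlag N)) ?_ ?_ ?_ ?_
  · intro s hs
    have : lab lam k (s.1, fun i => if i = s.1 k then - s.2 i else s.2 i) = lab lam k s := by
      unfold lab
      apply Multiset.map_congr rfl
      intro q hq
      rw [Multiset.mem_range] at hq
      congr 1
      funext i
      simp only [lev]
      by_cases hi : i = s.1 k
      · subst hi
        have hq' : ¬ ((k : ℕ) ≤ q) := by omega
        simp [hq']
      · simp [hi]
    rw [this]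
    exact CharTwo.add_self_eq_zero _
  · intro s hs _ h
    have := congrArg (fun t : SFlag N => t.2 (s.1 k)) h
    simp only [HH, SS, Finset.mem_filter, Finset.mem_univ, true_and] at hs
    have h2 := hs.1.1.1 (s.1 k)
    simp only [if_true] at this
    revert this h2
    generalize s.2 (s.1 k) = u
    revert u; decide
  · intro s hs
    have hs1 := SS_lt (Finset.mem_filter.1 (Finset.mem_filter.1 hs).1).1 k (by omega)
    simp only [HH, SS, Finset.mem_filter, Finset.mem_univ, true_and] at hs ⊢
    obtain ⟨⟨⟨h1, h2⟩, h3⟩, h4⟩ := hs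
    refine ⟨⟨⟨fun i => ?_, fun i hi => ⟨(h2 i hi).1, ?_⟩⟩, ?_⟩, h4⟩
    · have := h1 i
      split_ifs
      · simpa using this
      · exact this
    · rw [if_neg]
      · exact (h2 i hi).2
      · rintro rfl; omega
    · rw [if_neg]
      · exact h3
      · exact fun h => h4 h.symm
  · intro s hs
    ext i
    · rfl
    · simp only
      split_ifs <;> simp

lemma sum_step (lam : (Fin N → SignType) → ℕ) (hN : 0 < N)
    (hodd : ∀ x, x ≠ 0 → lam (-x) = ngl (lam x))
    (hc : ∀ x y, x ≠ 0 → (∀ i, x i = 0 ∨ x i = y i) → lam x / 2 = lam y / 2 → lam x = lam y)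
    (k : ℕ) (hk : k ≤ N) :
    ∑ s ∈ SS N k, altM 0 (lab lam k s) = 1 := by
  induction k with
  | zero =>
    have : SS N 0 = {(1, fun _ => 1)} := by
      ext s
      simp only [SS, Finset.mem_filter, Finset.mem_univ, true_and, Finset.mem_singleton]
      constructor
      · rintro ⟨_, h⟩
        ext i
        · simp [(h i (by omega)).1]
        · simp [(h i (by omega)).2]
      · rintro rfl
        simp
    rw [this]
    simp [lab, altM, altL]
  | succ k ih =>
    have := sum_hemi lam hN hodd hc ⟨k, hk⟩
    simp only at this
    rw [this]
    have h2 : ∀ s : SFlag N, altM 0 (lab lam (k+1) s) + altM 1 (lab lam (k+1) s) =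
        ∑ r ∈ Finset.range (k+1), altM 0 ((lab lam (k+1) s).erase (lam (lev s r))) := by
      intro s
      rw [← altM_door 0]
      conv_lhs => 
        arg 1
        arg 2
        rw [lab]
      rw [Multiset.map_map]
      rfl
    simp only [h2]
    rw [Finset.sum_comm, Finset.sum_range_succ, Finset.sum_eq_zero, zero_add]
    · have := sum_last lam ⟨k, hk⟩
      simp only at this
      rw [this]
      exact ih (by omega)
    · intro r hr
      exact sum_inn lam ⟨k, hk⟩ r (by simpa using hr)

theorem tucker (M : ℕ) (lam : (Fin (M+1) → SignType) → ℕ)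
    (hodd : ∀ x, x ≠ 0 → lam (-x) = ngl (lam x))
    (hc : ∀ x y, x ≠ 0 → (∀ i, x i = 0 ∨ x i = y i) → lam x / 2 = lam y / 2 → lam x = lam y)
    (hM : ∀ x, x ≠ 0 → lam x < 2 * M) : False := by
  have h := sum_step lam (by omega) hodd hc (M+1) le_rfl
  have : ∃ s ∈ SS (M+1) (M+1), altM 0 (lab lam (M+1) s) ≠ 0 := by
    apply Finset.exists_ne_zero_of_sum_ne_zero
    rw [h]; exact one_ne_zero
  obtain ⟨s, hs, hne⟩ := this
  unfold altM at hne
  have hl : ((lab lam (M+1) s).sort (· ≤ ·)).length = M + 1 := by simp [lab]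
  have hcc := lab_compl lam (by omega) hc hs (M+1)
  have hx : ∀ x ∈ (lab lam (M+1) s).sort (· ≤ ·), x < 2 * M := by
    intro x hx
    rw [Multiset.mem_sort] at hx
    simp only [lab, Multiset.mem_map] at hx
    obtain ⟨r, _, rfl⟩ := hx
    exact hM _ (lev_ne hs (by omega) r)
  rcases altL_bound _ 0 M 0 (Multiset.pairwise_sort _ _) (by simpa using hcc) hx (by simp) hne with h | h
  · rw [h] at hl; simp at hl
  · omega
end tucker
section claimD
variable {M : ℕ}

def chD (M : ℕ) (y : ℕ → Bool) : Finset ℕ := (Finset.range M).filter (fun i => y i ≠ y (i+1))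

def sg (b : Bool) : SignType := if b then 1 else -1

lemma sg_inj {a b : Bool} (h : sg a = sg b) : a = b := by revert a b; decide

lemma sg_not (a : Bool) : sg (!a) = - sg a := by revert a; decide

def Cpl (x : Fin (M+1) → SignType) (y : ℕ → Bool) : Prop := ∀ i, x i = 0 ∨ x i = sg (y i)

def IsMx (x : Fin (M+1) → SignType) (y : ℕ → Bool) : Prop :=
  Cpl x y ∧ ∀ y', Cpl x y' → (chD M y').card ≤ (chD M y).card

lemma exists_mx (x : Fin (M+1) → SignType) : ∃ y, IsMx x y := by
  have hne : ∃ y, Cpl x y := by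
    refine ⟨fun i => if h : i < M + 1 then decide (x ⟨i, h⟩ = 1) else true, fun i => ?_⟩
    simp only [i.2, dif_pos, Fin.eta]
    generalize x i = u
    revert u; decide
  obtain ⟨y0, h0⟩ := hne
  let T : Set ℕ := {m | ∃ y, Cpl x y ∧ (chD M y).card = m}
  have hT : T.Nonempty := ⟨_, y0, h0, rfl⟩
  have hb : BddAbove T := by
    refine ⟨M, ?_⟩
    rintro m ⟨y, _, rfl⟩
    exact (Finset.card_filter_le _ _).trans (by simp)
  obtain ⟨y, hy, hm⟩ := Nat.sSup_mem hT hb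
  refine ⟨y, hy, fun y' hy' => ?_⟩
  rw [hm]
  exact le_csSup hb ⟨y', hy', rfl⟩

lemma chD_not (y : ℕ → Bool) : chD M (fun i => !(y i)) = chD M y := by
  unfold chD; congr 1; funext i; simp

lemma Cpl.neg {x : Fin (M+1) → SignType} {y : ℕ → Bool} (h : Cpl x y) :
    Cpl (-x) (fun i => !(y i)) := by
  intro i
  rcases h i with h | h
  · left; simp [h]
  · right; simp [h, sg_not]

lemma IsMx.neg {x : Fin (M+1) → SignType} {y : ℕ → Bool} (h : IsMx x y) :
    IsMx (-x) (fun i => !(y i)) := by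
  refine ⟨h.1.neg, fun y' hy' => ?_⟩
  have := h.2 (fun i => !(y' i)) (by simpa using hy'.neg)
  rw [chD_not] at this ⊢
  exact this

lemma IsMx.no_gain {x : Fin (M+1) → SignType} {y y' : ℕ → Bool} (h : IsMx x y) (h' : Cpl x y')
    (hs : ∀ i < M, y i ≠ y (i+1) → y' i ≠ y' (i+1)) : ∀ i < M, y' i ≠ y' (i+1) → y i ≠ y (i+1) := by
  have hsub : chD M y ⊆ chD M y' := by
    intro i hi
    simp only [chD, Finset.mem_filter, Finset.mem_range] at hi ⊢
    exact ⟨hi.1, hs i hi.1 hi.2⟩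
  have := Finset.eq_of_subset_of_card_le hsub (h.2 y' h')
  intro i hi hne
  have h3 : i ∈ chD M y := by
    rw [this]; simp only [chD, Finset.mem_filter, Finset.mem_range]; exact ⟨hi, hne⟩
  simp only [chD, Finset.mem_filter, Finset.mem_range] at h3
  exact h3.2

lemma IsMx.pre {x : Fin (M+1) → SignType} {y : ℕ → Bool} (h : IsMx x y) (p : ℕ) (hp : p < M + 1)
    (hx : ∀ i : Fin (M+1), (i : ℕ) < p → x i = 0) (i : ℕ) (hi : i < p) : y i ≠ y (i+1) := by
  intro heq
  have h' : Cpl x (fun j => if j ≤ i then !(y j) else y j) := by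
    intro j
    by_cases hj : (j : ℕ) ≤ i
    · left; exact hx j (by omega)
    · simp only [hj, if_false]; exact h.1 j
  refine h.no_gain h' ?_ i (by omega) ?_ heq
  · intro j hj hne
    rcases lt_trichotomy j i with hji | hji | hji
    · have h1 : j ≤ i := by omega
      have h2 : j + 1 ≤ i := by omega
      simpa [h1, h2] using hne
    · subst hji; exact absurd heq hne
    · have h1 : ¬ j ≤ i := by omega
      have h2 : ¬ j + 1 ≤ i := by omega
      simpa [h1, h2] using hne
  · simp [heq]

lemma IsMx.head {x : Fin (M+1) → SignType} (hx0 : x ≠ 0) {y y' : ℕ → Bool} (h : IsMx x y) (h' : IsMx x y') :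
    y 0 = y' 0 := by
  have hex : ∃ p, ∃ hp : p < M + 1, x ⟨p, hp⟩ ≠ 0 := by
    obtain ⟨i, hi⟩ := Function.ne_iff.1 hx0
    exact ⟨i, i.2, hi⟩
  classical
  obtain ⟨hp, hpx⟩ := Nat.find_spec hex
  have hmin : ∀ i : Fin (M+1), (i : ℕ) < Nat.find hex → x i = 0 := by
    intro i hi
    have := Nat.find_min hex hi
    by_contra hne
    exact this ⟨i.2, hne⟩
  set p := Nat.find hex
  have key : ∀ i ≤ p, (y i = y' i → y 0 = y' 0) := by
    intro i
    induction i with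
    | zero => intro _ h; exact h
    | succ i ih =>
      intro hi he
      apply ih (by omega)
      have h1 := h.pre p hp hmin i (by omega)
      have h2 := h'.pre p hp hmin i (by omega)
      revert h1 h2 he
      generalize y i = a
      generalize y (i+1) = b
      generalize y' i = c
      generalize y' (i+1) = d
      revert a b c d; decide
  apply key p le_rfl
  have h1 := (h.1 ⟨p, hp⟩).resolve_left hpx
  have h2 := (h'.1 ⟨p, hp⟩).resolve_left hpx
  exact sg_inj (h1.symm.trans h2)

lemma IsMx.zeros {x : Fin (M+1) → SignType} (hx0 : x ≠ 0) {y : ℕ → Bool} (h : IsMx x y) :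
    (Finset.univ.filter (fun i => x i = 0)).card ≤ 2 * (chD M y).card := by
  have hsub : (Finset.univ.filter (fun i => x i = 0)).map Fin.valEmbedding ⊆
      chD M y ∪ (chD M y).image (· + 1) := by
    intro i hi
    simp only [Finset.mem_map, Finset.mem_filter, Finset.mem_univ, true_and] at hi
    obtain ⟨i, hi, rfl⟩ := hi
    by_contra hcon
    simp only [Finset.mem_union, Finset.mem_image, chD, Finset.mem_filter, Finset.mem_range, Fin.valEmbedding_apply, not_or, not_and, not_exists, not_not] at hcon
    obtain ⟨hc1, hc2⟩ := hcon
    have h' : Cpl x (fun j => if j = i then !(y j) else y j) := by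
      intro j
      by_cases hj : (j : ℕ) = i
      · left; rw [Fin.ext hj]; exact hi
      · simp only [hj, if_false]; exact h.1 j
    have hs : ∀ j < M, y j ≠ y (j+1) → (fun j => if j = (i:ℕ) then !(y j) else y j) j ≠ (fun j => if j = (i:ℕ) then !(y j) else y j) (j+1) := by
      intro j hj hne
      have h1 : j ≠ i := by rintro rfl; exact hne (hc1 hj)
      have h2 : j + 1 ≠ i := fun hh => hc2 j ⟨hj, hne⟩ hh
      simpa [h1, h2] using hne
    have hng := h.no_gain h' hs
    have hM : 0 < M := by
      by_contra hM
      apply hx0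
      funext j
      have : j = i := Fin.ext (by omega)
      rw [this, hi]; rfl
    by_cases hiM : (i : ℕ) < M
    · refine hng i hiM ?_ (hc1 hiM)
      simp [hc1 hiM]
    · have h2 := i.2
      obtain ⟨k, hk⟩ : ∃ k, (i : ℕ) = k + 1 := ⟨i - 1, by omega⟩
      have hyk : y k = y (k+1) := by
        by_contra hne
        exact hc2 k ⟨by omega, hne⟩ hk.symm
      refine hng k (by omega) ?_ hyk
      simp [hk, hyk]
  have := Finset.card_le_card hsub
  rw [Finset.card_map] at this
  have h2 := Finset.card_union_le (chD M y) ((chD M y).image (· + 1))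
  have h3 : ((chD M y).image (· + 1)).card ≤ (chD M y).card := Finset.card_image_le
  omega

def sS {n : ℕ} (v : ℕ → Fin n → ℝ) (x : Fin (M+1) → SignType) (j : Fin n) : ℝ :=
  ∑ i, ((x i : SignType) : ℝ) * v i j

lemma sS_neg {n : ℕ} (v : ℕ → Fin n → ℝ) (x : Fin (M+1) → SignType) (j : Fin n) :
    sS v (-x) j = - sS v x j := by
  unfold sS
  rw [← Finset.sum_neg_distrib]
  apply Finset.sum_congr rfl
  intro i _
  rw [Pi.neg_apply]
  cases x i <;> simp

lemma sS_diff {n : ℕ} (v : ℕ → Fin n → ℝ) {δ : ℝ} (hv : ∀ i < M + 1, ∀ j, |v i j| ≤ δ)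
    (x z : Fin (M+1) → SignType) (h : ∀ i, x i = 0 ∨ x i = z i) (j : Fin n) :
    |sS v x j - sS v z j| ≤ (Finset.univ.filter (fun i => x i = 0)).card * δ := by
  unfold sS
  rw [← Finset.sum_sub_distrib, ← nsmul_eq_mul, ← Finset.sum_const, Finset.sum_filter]
  refine (Finset.abs_sum_le_sum_abs _ _).trans (Finset.sum_le_sum fun i _ => ?_)
  have h1 := hv i i.2 j
  have h0 := (abs_nonneg _).trans h1
  split_ifs with hi
  · rw [hi]
    cases z i <;> simp [h1, h0]
  · rw [(h i).resolve_left hi]; simp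

theorem claimD {n : ℕ} (hn : n ≤ M) (v : ℕ → Fin n → ℝ) {δ : ℝ} (hδ : 0 ≤ δ) (hv : ∀ i < M + 1, ∀ j, |v i j| ≤ δ) :
    ∃ y : ℕ → Bool, (chD M y).card ≤ n ∧ ∀ j, |∑ i ∈ Finset.range (M+1), ((sg (y i) : SignType) : ℝ) * v i j| ≤ 6 * n * δ := by
  by_contra hcon
  push Not at hcon
  choose Y hY using fun x : Fin (M+1) → SignType => exists_mx x
  have hex : ∀ x : Fin (M+1) → SignType, x ≠ 0 → (chD M (Y x)).card ≤ n → ∃ j, 4 * n * δ < |sS v x j| := by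
    intro x hx hc
    obtain ⟨j, hj⟩ := hcon (Y x) hc
    refine ⟨j, ?_⟩
    rw [Finset.sum_range] at hj
    have h1 := sS_diff v hv x (fun i => sg (Y x i)) (hY x).1 j
    have h2 := (hY x).zeros hx
    have h3 : ((Finset.univ.filter (fun i => x i = 0)).card : ℝ) ≤ 2 * n := by
      exact_mod_cast (by omega : (Finset.univ.filter (fun i => x i = 0)).card ≤ 2 * n)
    have h4 := mul_le_mul_of_nonneg_right h3 hδ
    have h5 : 6 * n * δ < |sS v (fun i : Fin (M+1) => sg (Y x i)) j| := hj
    have h6 := abs_sub_abs_le_abs_sub (sS v (fun i : Fin (M+1) => sg (Y x i)) j) (sS v x j)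
    rw [abs_sub_comm] at h6
    linarith
  have hnn : 0 ≤ n * δ := by positivity
  have hmx : ∀ x y, IsMx x y → (chD M y).card = (chD M (Y x)).card := fun x y h =>
    le_antisymm ((hY x).2 y h.1) (h.2 _ (hY x).1)
  have hmneg : ∀ x, (chD M (Y (-x))).card = (chD M (Y x)).card := by
    intro x
    rw [← hmx _ _ (hY x).neg, chD_not]
  classical
  let pick : (Fin n → ℝ) → Fin n → Prop := fun a j => 4 * n * δ < a j ∧ ∀ i < j, ¬ (4 * n * δ < a i)
  have hpick : ∀ x : Fin (M+1) → SignType, ∃ J : ℕ, (∃ j : Fin n, 4 * n * δ < |sS v x j|) → ∃ h : J < n, pick (fun j => |sS v x j|) ⟨J, h⟩ := by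
    intro x
    by_cases h : ∃ j : Fin n, 4 * n * δ < |sS v x j|
    · have hw := wellFounded_lt (α := Fin n)
      obtain ⟨j, hj, hmin⟩ := hw.has_min {j : Fin n | 4 * n * δ < |sS v x j|} h
      exact ⟨j, fun _ => ⟨j.2, hj, fun i hi hh => hmin i hh hi⟩⟩
    · exact ⟨0, fun h' => absurd h' h⟩
  choose J hJ using hpick
  have huniq : ∀ a : Fin n → ℝ, ∀ i j, pick a i → pick a j → i = j := by
    intro a i j hi hj
    rcases lt_trichotomy i j with h | h | h
    · exact absurd hi.1 (hj.2 i h)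
    · exact h
    · exact absurd hj.1 (hi.2 j h)
  let lam : (Fin (M+1) → SignType) → ℕ := fun x =>
    if (chD M (Y x)).card ≤ n then 2 * J x + (if ∃ h : J x < n, 0 < sS v x ⟨J x, h⟩ then 0 else 1)
    else 2 * ((chD M (Y x)).card - 1) + (if Y x 0 = true then 0 else 1)
  refine tucker M lam ?_ ?_ ?_
  · intro x hx
    have hx' : -x ≠ 0 := by
      intro h
      apply hx
      rw [← neg_neg x, h]
      rfl
    simp only [lam, hmneg]
    by_cases hq : (chD M (Y x)).card ≤ n
    · simp only [hq, if_true]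
      obtain ⟨h1, h2⟩ := hJ x (hex x hx hq)
      obtain ⟨h3, h4⟩ := hJ (-x) (hex (-x) hx' (by rw [hmneg]; exact hq))
      have he : J (-x) = J x := by
        simp only [sS_neg, abs_neg] at h4
        have := huniq (fun j => |sS v x j|) _ _ h2 h4
        simpa using (congrArg Fin.val this).symm
      simp only [he, sS_neg]
      have h5 := h2.1
      simp only at h5
      simp only [h1, exists_true_left]
      rcases lt_trichotomy 0 (sS v x ⟨J x, h1⟩) with h | h | h
      · have h' : ¬ (0 < - sS v x ⟨J x, h1⟩) := by linarith
        simp only [h, h', if_true, if_false, ngl]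
        split_ifs <;> omega
      · rw [← h] at h5; simp at h5; linarith
      · have h' : (0 < - sS v x ⟨J x, h1⟩) := by linarith
        have h'' : ¬ (0 < sS v x ⟨J x, h1⟩) := by linarith
        simp only [h', h'', if_true, if_false, ngl]
        split_ifs <;> omega
    · simp only [hq, if_false]
      have := (hY (-x)).head hx' (hY x).neg
      rw [this]
      cases Y x 0 <;> simp [ngl]
  · intro x z hx hxz heq
    have hz : z ≠ 0 := by
      rintro rfl
      apply hx
      funext i
      rcases hxz i with h | h <;> exact h
    simp only [lam] at heq ⊢
    have hcz : Cpl x (Y z) := by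
      intro i
      rcases hxz i with h | h
      · left; exact h
      · rw [h]; exact (hY z).1 i
    have hle := (hY x).2 _ hcz
    by_cases hq : (chD M (Y x)).card ≤ n
    · have hq' : (chD M (Y z)).card ≤ n := hle.trans hq
      simp only [hq, hq', if_true] at heq ⊢
      have he : J x = J z := by
        split_ifs at heq <;> omega
      obtain ⟨h1, h2⟩ := hJ x (hex x hx hq)
      obtain ⟨h3, h4⟩ := hJ z (hex z hz hq')
      simp only [← he, h1, exists_true_left] at h4 ⊢
      have h5 := h2.1
      have h6 := h4.1
      have h7 := sS_diff v hv x z hxz ⟨J x, h1⟩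
      have h8 := (hY x).zeros hx
      have h9 : ((Finset.univ.filter (fun i => x i = 0)).card : ℝ) ≤ 2 * n := by
        exact_mod_cast (by omega : (Finset.univ.filter (fun i => x i = 0)).card ≤ 2 * n)
      have h10 := mul_le_mul_of_nonneg_right h9 hδ
      simp only at h5 h6
      rw [abs_le] at h7
      rw [lt_abs] at h5 h6
      have : (0 < sS v x ⟨J x, h1⟩) ↔ (0 < sS v z ⟨J x, h1⟩) := by
        constructor
        · intro h
          rcases h5 with h5 | h5 <;> rcases h6 with h6 | h6 <;> linarith
        · intro h
          rcases h5 with h5 | h5 <;> rcases h6 with h6 | h6 <;> linarith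
      simp only [this]
    · simp only [hq, if_false] at heq ⊢
      by_cases hq' : (chD M (Y z)).card ≤ n
      · simp only [hq', if_true] at heq
        obtain ⟨h3, h4⟩ := hJ z (hex z hz hq')
        split_ifs at heq <;> omega
      · simp only [hq', if_false] at heq ⊢
        have hcc : (chD M (Y x)).card = (chD M (Y z)).card := by
          split_ifs at heq <;> omega
        have hmz : IsMx x (Y z) := ⟨hcz, fun y' hy' => hcc ▸ (hY x).2 y' hy'⟩
        rw [hcc, (hY x).head hx hmz]
  · intro x hx
    simp only [lam]
    have hM : (chD M (Y x)).card ≤ M := (Finset.card_filter_le _ _).trans (by simp)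
    by_cases hq : (chD M (Y x)).card ≤ n
    · obtain ⟨h1, h2⟩ := hJ x (hex x hx hq)
      simp only [hq, if_true]
      split_ifs <;> omega
    · simp only [hq, if_false]
      split_ifs <;> omega
end claimD
section limit

def GG {n : ℕ} (F : Fin n → ℝ → ℝ) (t : ℕ → ℝ) (j : Fin n) : ℝ :=
  ∑ k ∈ Finset.range (n+1), (-1 : ℝ)^k * (F j (t (k+1)) - F j (t k))

def KK (n : ℕ) : Set (ℕ → ℝ) :=
  {t | (∀ k, t k ∈ Set.Icc (0:ℝ) 1) ∧ t 0 = 0 ∧ t (n+1) = 1 ∧ ∀ k ≤ n, t k ≤ t (k+1)}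

lemma chD_mono (y : ℕ → Bool) {a b : ℕ} (h : a ≤ b) : (chD a y).card ≤ (chD b y).card := by
  apply Finset.card_le_card
  intro i hi
  simp only [chD, Finset.mem_filter, Finset.mem_range] at hi ⊢
  exact ⟨by omega, hi.2⟩

lemma sg_chD (y : ℕ → Bool) (i : ℕ) : ((sg (y i) : SignType) : ℝ) = (sg (y 0) : SignType) * (-1 : ℝ)^(chD i y).card := by
  induction i with
  | zero => simp [chD]
  | succ i ih =>
    by_cases h : y i = y (i+1)
    · have : chD (i+1) y = chD i y := by
        unfold chD; rw [Finset.range_add_one, Finset.filter_insert, if_neg (by simpa using h)]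
      rw [this, ← ih, h]
    · have : (chD (i+1) y).card = (chD i y).card + 1 := by
        unfold chD
        rw [Finset.range_add_one, Finset.filter_insert, if_pos h, Finset.card_insert_of_notMem (by simp)]
      rw [this, pow_succ, ← mul_assoc, ← ih]
      have h2 : y (i+1) = !(y i) := by
        revert h
        generalize y i = a
        generalize y (i+1) = b
        revert a b; decide
      rw [h2]
      cases y i <;> simp [sg]

lemma tele (g : ℕ → ℝ) (c : ℕ → ℕ) (hc : Monotone c) (k m : ℕ) :
    ∑ i ∈ Finset.range m, (if c i < k then g (i+1) - g i else 0) =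
      g ((Finset.range m).filter (fun i => c i < k)).card - g 0 := by
  induction m with
  | zero => simp
  | succ m ih =>
    by_cases h : c m < k
    · have h1 : (Finset.range (m+1)).filter (fun i => c i < k) = Finset.range (m+1) := by
        apply Finset.filter_true_of_mem
        intro i hi
        rw [Finset.mem_range] at hi
        exact (hc (by omega : i ≤ m)).trans_lt h
      rw [h1, Finset.card_range, ← Finset.sum_filter, h1, Finset.sum_range_sub]
    · rw [Finset.sum_range_succ, ih, if_neg h, add_zero, Finset.range_add_one, Finset.filter_insert, if_neg h]

lemma approx {n : ℕ} (F : Fin n → ℝ → ℝ) (hF : ∀ j, Continuous (F j)) (ε : ℝ) (hε : 0 < ε) :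
    ∃ t ∈ KK n, ∀ j, |GG F t j| ≤ ε := by
  have hΦ : Continuous (fun x j => F j x) := continuous_pi hF
  have huc := (isCompact_Icc (a := (0:ℝ)) (b := 1)).uniformContinuousOn_of_continuous hΦ.continuousOn
  rw [Metric.uniformContinuousOn_iff] at huc
  set δ : ℝ := ε / (6 * n + 1) with hδd
  have hδ : 0 < δ := by positivity
  obtain ⟨η, hη, huc⟩ := huc δ hδ
  obtain ⟨m, hm⟩ := exists_nat_one_div_lt hη
  set M := m + n with hM
  have hMpos : (0:ℝ) < (M:ℝ) + 1 := by positivity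
  let g : Fin n → ℕ → ℝ := fun j i => F j (i / ((M:ℝ) + 1))
  let v : ℕ → Fin n → ℝ := fun i j => g j (i+1) - g j i
  have hIcc : ∀ i : ℕ, i ≤ M + 1 → (i / ((M:ℝ) + 1)) ∈ Set.Icc (0:ℝ) 1 := by
    intro i hi
    refine ⟨by positivity, ?_⟩
    rw [div_le_one hMpos]; exact_mod_cast hi
  have hv : ∀ i < M + 1, ∀ j, |v i j| ≤ δ := by
    intro i hi j
    have h1 := huc _ (hIcc (i+1) (by omega)) _ (hIcc i (by omega)) (by
      rw [Real.dist_eq]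
      have : (((i+1 : ℕ) : ℝ) / ((M:ℝ)+1) - i / ((M:ℝ)+1)) = 1 / ((M:ℝ)+1) := by
        push_cast; field_simp; ring
      rw [this, abs_of_pos (by positivity)]
      refine lt_of_le_of_lt ?_ hm
      apply one_div_le_one_div_of_le (by positivity)
      have : (m:ℝ) ≤ M := by exact_mod_cast (by omega : m ≤ M)
      linarith)
    have h2 := (dist_le_pi_dist _ _ j).trans h1.le
    rw [Real.dist_eq] at h2
    exact h2
  obtain ⟨y, hy, hyb⟩ := claimD (M := M) (by omega : n ≤ M) v hδ.le hv
  let c : ℕ → ℕ := fun i => (chD i y).card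
  have hc : Monotone c := fun a b h => chD_mono y h
  have hcn : ∀ i < M + 1, c i < n + 1 := fun i hi => Nat.lt_succ_of_le ((hc (by omega : i ≤ M)).trans hy)
  let A : ℕ → ℕ := fun k => ((Finset.range (M+1)).filter (fun i => c i < k)).card
  let t : ℕ → ℝ := fun k => A k / ((M:ℝ) + 1)
  have hA : ∀ k, A k ≤ M + 1 := fun k => (Finset.card_filter_le _ _).trans (by simp)
  refine ⟨t, ⟨fun k => hIcc _ (hA k), by simp [t, A], ?_, ?_⟩, ?_⟩
  · have : A (n+1) = M + 1 := by
      simp only [A]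
      rw [Finset.filter_true_of_mem]
      · simp
      · intro i hi; exact hcn i (by simpa using hi)
    simp only [t, this]
    push_cast
    exact div_self hMpos.ne'
  · intro k _
    simp only [t]
    apply div_le_div_of_nonneg_right _ hMpos.le
    have : A k ≤ A (k+1) := by
      apply Finset.card_le_card
      intro i hi
      simp only [Finset.mem_filter] at hi ⊢
      exact ⟨hi.1, by omega⟩
    exact_mod_cast this
  · intro j
    have hG : GG F t j = ∑ i ∈ Finset.range (M+1), (-1:ℝ)^(c i) * v i j := by
      have h1 : ∀ k, F j (t (k+1)) - F j (t k) = ∑ i ∈ Finset.range (M+1), if c i = k then v i j else 0 := by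
        intro k
        have e1 := tele (g j) c hc (k+1) (M+1)
        have e2 := tele (g j) c hc k (M+1)
        have : F j (t (k+1)) - F j (t k) = (g j (A (k+1)) - g j 0) - (g j (A k) - g j 0) := by
          simp only [g, t]; ring
        rw [this]
        simp only [A]
        rw [← e1, ← e2, ← Finset.sum_sub_distrib]
        apply Finset.sum_congr rfl
        intro i _
        simp only [v]
        split_ifs <;> first | omega | simp
      unfold GG
      simp only [h1, Finset.mul_sum]
      rw [Finset.sum_comm]
      apply Finset.sum_congr rfl
      intro i hi
      rw [Finset.mem_range] at hi
      simp only [mul_ite, mul_zero]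
      rw [Finset.sum_ite_eq, if_pos (Finset.mem_range.2 (hcn i hi))]
    have h2 := hyb j
    have h3 : ∑ i ∈ Finset.range (M+1), ((sg (y i) : SignType) : ℝ) * v i j = ((sg (y 0) : SignType) : ℝ) * GG F t j := by
      rw [hG, Finset.mul_sum]
      apply Finset.sum_congr rfl
      intro i _
      rw [sg_chD]; ring
    rw [h3, abs_mul] at h2
    have h4 : |((sg (y 0) : SignType) : ℝ)| = 1 := by cases y 0 <;> simp [sg]
    rw [h4, one_mul] at h2
    refine h2.trans ?_
    rw [hδd, ← mul_div_assoc, div_le_iff₀ (by positivity)]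
    nlinarith

lemma exact_zero {n : ℕ} (F : Fin n → ℝ → ℝ) (hF : ∀ j, Continuous (F j)) :
    ∃ t ∈ KK n, ∀ j, GG F t j = 0 := by
  have hK : IsCompact (KK n) := by
    have h1 : IsCompact (Set.pi Set.univ (fun _ : ℕ => Set.Icc (0:ℝ) 1)) :=
      isCompact_univ_pi (fun _ => isCompact_Icc)
    have h2 : IsClosed {t : ℕ → ℝ | t 0 = 0 ∧ t (n+1) = 1 ∧ ∀ k ≤ n, t k ≤ t (k+1)} := by
      apply IsClosed.and (isClosed_eq (continuous_apply 0) continuous_const)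
      apply IsClosed.and (isClosed_eq (continuous_apply _) continuous_const)
      simp only [Set.ofPred_forall]
      exact isClosed_iInter fun k => isClosed_iInter fun _ => isClosed_le (continuous_apply _) (continuous_apply _)
    convert h1.inter_right h2 using 1
    ext t
    simp only [KK, Set.mem_inter_iff, Set.mem_pi, Set.mem_univ, true_imp_iff, Set.mem_setOf_eq]
  have hGc : Continuous (fun t => ∑ j, |GG F t j|) := by
    unfold GG
    refine continuous_finsetSum _ fun j _ => continuous_abs.comp (continuous_finsetSum _ fun k _ => ?_)
    exact continuous_const.mul (((hF j).comp (continuous_apply _)).sub ((hF j).comp (continuous_apply _)))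
  obtain ⟨t0, ht0, _⟩ := approx F hF 1 one_pos
  obtain ⟨t, ht, hmin⟩ := hK.exists_isMinOn ⟨t0, ht0⟩ hGc.continuousOn
  have hz : ∑ j, |GG F t j| ≤ 0 := by
    apply le_of_forall_pos_le_add
    intro ε hε
    obtain ⟨s, hs, hsε⟩ := approx F hF (ε / (n+1)) (by positivity)
    have h1 : ∑ j, |GG F t j| ≤ ∑ j, |GG F s j| := hmin hs
    have h2 : ∑ j, |GG F s j| ≤ ∑ _j : Fin n, ε / (n+1) := Finset.sum_le_sum fun j _ => hsε j
    have h3 : ∑ _j : Fin n, ε / (n+1) ≤ ε := by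
      simp only [Finset.sum_const, Finset.card_univ, Fintype.card_fin, nsmul_eq_mul]
      rw [← mul_div_assoc, div_le_iff₀ (by positivity)]
      nlinarith
    linarith
  refine ⟨t, ht, fun j => ?_⟩
  have h0 : ∑ j, |GG F t j| = 0 := le_antisymm hz (Finset.sum_nonneg fun _ _ => abs_nonneg _)
  rw [Finset.sum_eq_zero_iff_of_nonneg (fun _ _ => abs_nonneg _)] at h0
  exact abs_eq_zero.1 (h0 j (Finset.mem_univ _))
end limit

lemma tmono {n : ℕ} {t : ℕ → ℝ} (hm : ∀ k ≤ n, t k ≤ t (k + 1)) {a b : ℕ} (hab : a ≤ b) (hb : b ≤ n + 1) :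
    t a ≤ t b := by
  induction b, hab using Nat.le_induction with
  | base => exact le_rfl
  | succ b hab ih => exact (ih (by omega)).trans (hm b (by omega))




/-- **Hobby–Rice theorem.** Given integrable functions `f 1, …, f n` on `[0,1]`, there are
points `0 = t 0 ≤ t 1 ≤ … ≤ t (n+1) = 1` and a function `h : [0,1] → {±1}` with
`h x = (-1)^k` on `[t k, t (k+1))` and `h 1 = (-1)^n`, such that
`∫₀¹ f j · h = 0` for all `j`. -/
theorem hobby_rice (n : ℕ) (f : Fin n → ℝ → ℝ)
    (hf : ∀ j, IntegrableOn (f j) (Set.Icc 0 1)) :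
    ∃ t : ℕ → ℝ, ∃ h : ℝ → ℝ,
      t 0 = 0 ∧ t (n + 1) = 1 ∧
      (∀ k ≤ n, t k ≤ t (k + 1)) ∧
      (∀ k ≤ n, ∀ x ∈ Set.Ico (t k) (t (k + 1)), h x = (-1 : ℝ) ^ k) ∧
      h 1 = (-1 : ℝ) ^ n ∧
      ∀ j : Fin n, ∫ x in (0:ℝ)..1, f j x * h x = 0 := by
  classical
  let f' : Fin n → ℝ → ℝ := fun j => (Set.Icc (0:ℝ) 1).indicator (f j)
  have hf' : ∀ j, Integrable (f' j) := fun j => (integrable_indicator_iff measurableSet_Icc).2 (hf j)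
  let F : Fin n → ℝ → ℝ := fun j x => ∫ u in (0:ℝ)..x, f' j u
  have hF : ∀ j, Continuous (F j) := fun j =>
    intervalIntegral.continuous_primitive (fun a b => (hf' j).intervalIntegrable) 0
  obtain ⟨t, ⟨htI, h0, h1, hm⟩, hG⟩ := exact_zero F hF
  let h : ℝ → ℝ := fun x => if hx : ∃ k, k ≤ n ∧ x ∈ Set.Ico (t k) (t (k+1)) then (-1:ℝ)^(Classical.choose hx) else (-1:ℝ)^n
  have hh : ∀ k ≤ n, ∀ x ∈ Set.Ico (t k) (t (k + 1)), h x = (-1 : ℝ) ^ k := by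
    intro k hk x hx
    have hex : ∃ k, k ≤ n ∧ x ∈ Set.Ico (t k) (t (k+1)) := ⟨k, hk, hx⟩
    simp only [h, dif_pos hex]
    obtain ⟨h2, h3⟩ := Classical.choose_spec hex
    set q := Classical.choose hex
    have : q = k := by
      rcases lt_trichotomy q k with hl | hl | hl
      · have := tmono hm (show q + 1 ≤ k by omega) (by omega)
        linarith [hx.1, h3.2]
      · exact hl
      · have := tmono hm (show k + 1 ≤ q by omega) (by omega)
        linarith [hx.2, h3.1]
    rw [this]
  refine ⟨t, h, h0, h1, hm, hh, ?_, fun j => ?_⟩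
  · have : ¬ ∃ k, k ≤ n ∧ (1:ℝ) ∈ Set.Ico (t k) (t (k+1)) := by
      rintro ⟨k, _, hx⟩
      linarith [hx.2, (htI (k+1)).2]
    simp only [h, dif_neg this]
  · have hae : ∀ k ≤ n, ∀ᵐ x : ℝ, x ∈ Set.uIoc (t k) (t (k+1)) → f j x * h x = f' j x * (-1:ℝ)^k := by
      intro k hk
      have hne : ∀ᵐ x : ℝ, x ≠ t (k+1) := by
        simp [ae_iff]
      filter_upwards [hne] with x hx hxm
      rw [Set.uIoc_of_le (hm k hk)] at hxm
      rw [hh k hk x ⟨hxm.1.le, lt_of_le_of_ne hxm.2 hx⟩]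
      have : x ∈ Set.Icc (0:ℝ) 1 := ⟨(htI k).1.trans hxm.1.le, hxm.2.trans (htI (k+1)).2⟩
      simp only [f', Set.indicator_of_mem this]
    have hint : ∀ k < n + 1, IntervalIntegrable (fun x => f j x * h x) volume (t k) (t (k+1)) := by
      intro k hk
      have : IntervalIntegrable (fun x => f' j x * (-1:ℝ)^k) volume (t k) (t (k+1)) :=
        ((hf' j).intervalIntegrable).mul_const _
      refine this.congr_ae ?_
      have h2 := hae k (by omega)
      rw [Filter.EventuallyEq, ae_restrict_iff' measurableSet_uIoc]
      filter_upwards [h2] with x hx hxm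
      exact (hx hxm).symm
    have hsum := intervalIntegral.sum_integral_adjacent_intervals hint
    rw [h0, h1] at hsum
    rw [← hsum, ← hG j, GG]
    apply Finset.sum_congr rfl
    intro k hk
    rw [Finset.mem_range] at hk
    rw [intervalIntegral.integral_congr_ae (hae k (by omega)), intervalIntegral.integral_mul_const, mul_comm]
    congr 1
    simp only [F]
    rw [intervalIntegral.integral_interval_sub_left (hf' j).intervalIntegrable (hf' j).intervalIntegrable]
end

section
/- Let f_1, ..., f_n ∈ L^1([0,1]; ℂ). Then there exists a smooth function h : [0,1] → S^1 (where S^1 is the unit circle in ℂ) such that ∫_0^1 f_j(x) h(x) dx = 0 for all j = 1, ..., n. (Lazarev–Lieb theorem.) -/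
open MeasureTheory

open scoped ContDiff FourierTransform

namespace LL

lemma exp_bound (R p q : ℝ) (hp : |p| ≤ R) (hq : |q| ≤ R) :
    ‖Complex.exp (Complex.I * p) - Complex.exp (Complex.I * q) - Complex.I * (p - q)‖
      ≤ R * |p - q| := by
  have key := Convex.norm_image_sub_le_of_norm_hasDerivWithin_le (𝕜 := ℝ)
    (f := fun x : ℝ => Complex.exp (Complex.I * x) - Complex.I * x)
    (f' := fun x : ℝ => Complex.exp (Complex.I * x) * (Complex.I * 1) - Complex.I * 1)
    (s := Set.Icc (-R) R) (C := R) (x := q) (y := p) ?_ ?_ (convex_Icc _ _)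
    (abs_le.1 hq) (abs_le.1 hp)
  · rw [Real.norm_eq_abs] at key
    refine le_trans (le_of_eq ?_) key
    congr 1
    ring
  · intro x _
    have h1 : HasDerivAt (fun x : ℝ => Complex.I * (x : ℂ)) (Complex.I * 1) x :=
      (Complex.ofRealCLM.hasDerivAt (x := x)).const_mul Complex.I
    exact (h1.cexp.sub h1).hasDerivWithinAt
  · intro x hx
    have : Complex.exp (Complex.I * x) * (Complex.I * 1) - Complex.I * 1
      = (Complex.exp (Complex.I * x) - 1) * Complex.I := by ring
    rw [this, norm_mul, Complex.norm_I, mul_one]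
    exact (Real.norm_exp_I_mul_ofReal_sub_one_le).trans (abs_le.2 hx)

lemma zero_of_approx {V : Type*} [NormedAddCommGroup V] [NormedSpace ℝ V] [CompleteSpace V]
    (Φ : V → V) (r : ℝ) (hr : 0 < r) (h0 : ‖Φ 0‖ ≤ r / 2)
    (h : ∀ u v, ‖u‖ ≤ r → ‖v‖ ≤ r → ‖Φ u - Φ v - (u - v)‖ ≤ 1 / 2 * ‖u - v‖) :
    ∃ v, Φ v = 0 := by
  have hA : ApproximatesLinearOn Φ (ContinuousLinearMap.id ℝ V) (Metric.closedBall 0 r)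
      (1 / 2 : NNReal) := by
    rw [ApproximatesLinearOn]
    intro u hu v hv
    have := h u v (by simpa using hu) (by simpa using hv)
    simpa using this
  let R : (ContinuousLinearMap.id ℝ V).NonlinearRightInverse :=
    { toFun := id, nnnorm := 1, bound' := by simp, right_inv' := by intro y; simp }
  obtain ⟨v, -, hv⟩ := hA.surjOn_closedBall_of_nonlinearRightInverse R hr.le (b := 0)
    subset_rfl (show (0 : V) ∈ _ by
      have hR : R.nnnorm = 1 := rfl
      rw [Metric.mem_closedBall, dist_zero_left, hR]
      refine h0.trans (le_of_eq ?_)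
      norm_num
      ring)
  exact ⟨v, hv⟩

/-- oscillating factor -/
noncomputable def E (t x : ℝ) : ℂ := (Real.fourierChar (-(x * t)) : ℂ)

lemma norm_E (t x : ℝ) : ‖E t x‖ = 1 := Circle.norm_coe _

lemma E_eq (t x : ℝ) : E t x = Complex.exp (((2 * Real.pi * -(x * t) : ℝ) : ℂ) * Complex.I) := by
  rw [E, Real.fourierChar_apply]

lemma E_smooth (t : ℝ) : ContDiff ℝ ∞ (E t) := by
  have : E t = fun x => Complex.exp (((2 * Real.pi * -(x * t) : ℝ) : ℂ) * Complex.I) :=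
    funext (E_eq t)
  rw [this]
  have h : ContDiff ℝ ∞ (fun x : ℝ => 2 * Real.pi * -(x * t)) :=
    contDiff_const.mul (contDiff_id.mul contDiff_const).neg
  exact ContDiff.cexp (ContDiff.mul (Complex.ofRealCLM.contDiff.comp h) contDiff_const)

lemma E_sq (t x : ℝ) : E t x * E t x = E (2 * t) x := by
  rw [E_eq, E_eq, ← Complex.exp_add]
  congr 1
  push_cast
  ring

lemma E_conj (t x : ℝ) : E t x * (starRingEnd ℂ) (E t x) = 1 := by
  rw [Complex.mul_conj, Complex.normSq_eq_norm_sq, norm_E]; simp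

lemma RL (g : ℝ → ℂ) :
    Filter.Tendsto (fun t => ∫ x in Set.Ioc (0:ℝ) 1, g x * E t x) Filter.atTop (nhds 0) := by
  have h := (Real.tendsto_integral_exp_smul_cocompact
    ((Set.Ioc (0:ℝ) 1).indicator g)).mono_left atTop_le_cocompact
  refine h.congr fun t => ?_
  rw [← integral_indicator measurableSet_Ioc]
  congr 1
  ext x
  by_cases hx : x ∈ Set.Ioc (0:ℝ) 1
  · simp only [Set.indicator_of_mem hx, E, Circle.smul_def, smul_eq_mul, mul_comm]
  · simp only [Set.indicator_of_notMem hx, smul_zero]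

/-- smooth functions -/
def S : Submodule ℂ (ℝ → ℂ) where
  carrier := {φ | ContDiff ℝ ∞ φ}
  add_mem' := by
    intro a b ha hb
    rw [Set.mem_ofPred_eq] at *
    exact ContDiff.add ha hb
  zero_mem' := by
    rw [Set.mem_ofPred_eq]
    exact contDiff_const (c := (0 : ℂ))
  smul_mem' := by
    intro c a ha
    rw [Set.mem_ofPred_eq] at *
    exact ContDiff.const_smul c ha

lemma S_smooth (φ : S) : ContDiff ℝ ∞ φ.1 := φ.2

lemma int_mul {g φ : ℝ → ℂ} (hg : IntegrableOn g (Set.Ioc 0 1)) (hφ : Continuous φ) :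
    IntegrableOn (fun x => g x * φ x) (Set.Ioc 0 1) := by
  have h : IntegrableOn g (Set.Icc 0 1) := by rwa [integrableOn_Icc_iff_integrableOn_Ioc]
  exact (h.mul_continuousOn hφ.continuousOn isCompact_Icc).mono_set Set.Ioc_subset_Icc_self

/-- integration against f -/
noncomputable def T (n : ℕ) (f : Fin n → ℝ → ℂ)
    (hf : ∀ j, IntegrableOn (f j) (Set.Ioc 0 1)) : S →ₗ[ℂ] (Fin n → ℂ) where
  toFun φ j := ∫ x in Set.Ioc (0:ℝ) 1, f j x * φ.1 x
  map_add' φ ψ := by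
    ext j
    simp only [Submodule.coe_add, Pi.add_apply, mul_add]
    exact integral_add (int_mul (hf j) (S_smooth φ).continuous) (int_mul (hf j) (S_smooth ψ).continuous)
  map_smul' c φ := by
    ext j
    simp only [Submodule.coe_smul, Pi.smul_apply, smul_eq_mul, RingHom.id_apply]
    rw [← integral_const_mul]
    congr 1
    ext x
    ring

/-- phase perturbation -/
noncomputable def P (t : ℝ) (a : ℝ → ℂ) (x : ℝ) : ℝ := 2 * (a x * (starRingEnd ℂ) (E t x)).im

noncomputable def H (t : ℝ) (a : ℝ → ℂ) (x : ℝ) : ℂ :=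
  E t x * Complex.exp (Complex.I * (P t a x : ℂ))

lemma norm_H (t : ℝ) (a : ℝ → ℂ) (x : ℝ) : ‖H t a x‖ = 1 := by
  rw [H, norm_mul, norm_E, mul_comm Complex.I, Complex.norm_exp_ofReal_mul_I, one_mul]

lemma H_smooth (t : ℝ) {a : ℝ → ℂ} (ha : ContDiff ℝ ∞ a) : ContDiff ℝ ∞ (H t a) := by
  have h1 : ContDiff ℝ ∞ (fun x => (starRingEnd ℂ) (E t x)) :=
    Complex.conjCLE.contDiff.comp (E_smooth t)
  have h2 : ContDiff ℝ ∞ (P t a) :=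
    contDiff_const.mul (Complex.imCLM.contDiff.comp (ha.mul h1))
  exact (E_smooth t).mul (contDiff_const.mul (Complex.ofRealCLM.contDiff.comp h2)).cexp

lemma P_abs (t : ℝ) (a : ℝ → ℂ) (x : ℝ) : |P t a x| ≤ 2 * ‖a x‖ := by
  rw [P, abs_mul, abs_two]
  have := Complex.abs_im_le_norm (a x * (starRingEnd ℂ) (E t x))
  rw [norm_mul, RCLike.norm_conj, norm_E, mul_one] at this
  linarith

lemma P_sub (t : ℝ) (a b : ℝ → ℂ) (x : ℝ) : P t a x - P t b x = P t (a - b) x := by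
  simp only [P, Pi.sub_apply, sub_mul, Complex.sub_im]; ring

lemma E_P (t : ℝ) (a : ℝ → ℂ) (x : ℝ) :
    E t x * (Complex.I * (P t a x : ℂ)) = a x - (starRingEnd ℂ) (a x) * E (2 * t) x := by
  have h : ∀ z : ℂ, Complex.I * ((2 * z.im : ℝ) : ℂ) = z - (starRingEnd ℂ) z := by
    intro z; apply Complex.ext <;> simp; ring
  rw [P, h, ← E_sq, map_mul, Complex.conj_conj]
  linear_combination (a x) * E_conj t x

lemma H_bound (t : ℝ) (a b : ℝ → ℂ) (x R D : ℝ) (ha : ‖a x‖ ≤ R) (hb : ‖b x‖ ≤ R)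
    (hab : ‖(a - b) x‖ ≤ D) :
    ‖H t a x - H t b x - (a - b) x + (starRingEnd ℂ) ((a - b) x) * E (2 * t) x‖
      ≤ 4 * R * D := by
  have h1 := exp_bound (2 * R) (P t a x) (P t b x)
    ((P_abs t a x).trans (by linarith)) ((P_abs t b x).trans (by linarith))
  have h2 : H t a x - H t b x - (a - b) x + (starRingEnd ℂ) ((a - b) x) * E (2 * t) x
      = E t x * (Complex.exp (Complex.I * (P t a x : ℂ)) - Complex.exp (Complex.I * (P t b x : ℂ))
        - Complex.I * ((P t a x : ℂ) - (P t b x : ℂ))) := by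
    have h3 := E_P t (a - b) x
    rw [← P_sub] at h3
    push_cast at h3
    simp only [H]
    linear_combination h3
  rw [h2, norm_mul, norm_E, one_mul]
  refine h1.trans ?_
  have h4 : |P t a x - P t b x| ≤ 2 * D := by
    rw [P_sub]; exact (P_abs _ _ _).trans (by linarith)
  have hR : 0 ≤ R := (norm_nonneg _).trans ha
  nlinarith

end LL

open LL in
/-- **Lazarev–Lieb theorem.** Given integrable complex-valued functions `f 1, …, f n` on
`[0,1]`, there is a smooth function `h : [0,1] → S¹` (i.e. smooth on `[0,1]` with values in
the unit circle) such that `∫₀¹ f j · h = 0` for all `j`. -/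
theorem lazarev_lieb (n : ℕ) (f : Fin n → ℝ → ℂ)
    (hf : ∀ j, IntegrableOn (f j) (Set.Icc 0 1)) :
    ∃ h : ℝ → ℂ,
      ContDiffOn ℝ (⊤ : ℕ∞) h (Set.Icc 0 1) ∧
      (∀ x ∈ Set.Icc (0:ℝ) 1, ‖h x‖ = 1) ∧
      ∀ j : Fin n, ∫ x in (0:ℝ)..1, f j x * h x = 0 := by
  have hf' : ∀ j, IntegrableOn (f j) (Set.Ioc 0 1) :=
    fun j => (hf j).mono_set Set.Ioc_subset_Icc_self
  set V := LinearMap.range (T n f hf') with hV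
  obtain ⟨A, hA⟩ := (T n f hf').rangeRestrict.exists_rightInverse_of_surjective
    (LinearMap.range_rangeRestrict _)
  have hA' : ∀ v : V, T n f hf' (A v) = v := fun v => by
    have := LinearMap.congr_fun hA v
    exact congrArg Subtype.val this
  let b := Module.finBasis ℂ V
  set d := Module.finrank ℂ V
  let φ : Fin d → ℝ → ℂ := fun k => (A (b k)).1
  have hφ : ∀ k, ContDiff ℝ ∞ (φ k) := fun k => (A (b k)).2
  have hexp : ∀ (v : V) x, (A v).1 x = ∑ k, b.repr v k * φ k x := by
    intro v x
    have h1 : A v = ∑ k, b.repr v k • A (b k) := by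
      have h2 := congrArg A (b.sum_repr v)
      rw [map_sum] at h2
      rw [← h2]
      exact Finset.sum_congr rfl fun k _ => map_smul _ _ _
    rw [h1]
    simp [φ, Finset.sum_apply]
  obtain ⟨C, hC0, hC⟩ : ∃ C : ℝ, 0 ≤ C ∧ ∀ (v : V) k, ‖b.repr v k‖ ≤ C * ‖v‖ := by
    refine ⟨‖(b.equivFunL : V →L[ℂ] (Fin d → ℂ))‖, ContinuousLinearMap.opNorm_nonneg _, fun v k => ?_⟩
    exact (norm_le_pi_norm (b.equivFunL v) k).trans
      ((b.equivFunL : V →L[ℂ] (Fin d → ℂ)).le_opNorm v)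
  have hMk : ∀ k, ∃ M, ∀ x ∈ Set.Icc (0:ℝ) 1, ‖φ k x‖ ≤ M := fun k =>
    isCompact_Icc.exists_bound_of_continuousOn (hφ k).continuous.continuousOn
  choose Mk hMk using hMk
  have hMk0 : ∀ k, 0 ≤ Mk k := fun k => (norm_nonneg _).trans (hMk k 0 (by simp))
  obtain ⟨M, hM0, hM⟩ : ∃ M : ℝ, 0 ≤ M ∧ ∀ (v : V), ∀ x ∈ Set.Ioc (0:ℝ) 1,
      ‖(A v).1 x‖ ≤ M * ‖v‖ := by
    refine ⟨C * ∑ k, Mk k, mul_nonneg hC0 (Finset.sum_nonneg fun k _ => hMk0 k), ?_⟩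
    intro v x hx
    rw [hexp, Finset.mul_sum, Finset.sum_mul]
    refine norm_sum_le_of_le _ fun k _ => ?_
    rw [norm_mul]
    have h1 := hC v k
    have h2 := hMk k x (Set.Ioc_subset_Icc_self hx)
    calc _ ≤ (C * ‖v‖) * Mk k := mul_le_mul h1 h2 (norm_nonneg _) (by positivity)
      _ = _ := by ring
  set Q : ℝ := ∑ j, ∫ x in Set.Ioc (0:ℝ) 1, ‖f j x‖ with hQ
  have hQj : ∀ j, ∫ x in Set.Ioc (0:ℝ) 1, ‖f j x‖ ≤ Q := fun j =>
    Finset.single_le_sum (f := fun j => ∫ x in Set.Ioc (0:ℝ) 1, ‖f j x‖)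
      (fun i _ => integral_nonneg fun x => norm_nonneg _) (Finset.mem_univ j)
  have hQ0 : 0 ≤ Q := Finset.sum_nonneg fun i _ => integral_nonneg fun x => norm_nonneg _
  obtain ⟨r, hr, hr'⟩ : ∃ r : ℝ, 0 < r ∧ 4 * M * M * Q * r ≤ 1 / 4 := by
    have h0 : 0 ≤ 4 * M * M * Q := by positivity
    refine ⟨1 / (4 * (4 * M * M * Q + 1)), by positivity, ?_⟩
    rw [mul_one_div, div_le_div_iff₀ (by positivity) (by norm_num)]
    linarith
  obtain ⟨ε, hε, hε1⟩ : ∃ ε : ℝ, 0 < ε ∧ d * C * ε ≤ 1 / 4 := by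
    have h0 : 0 ≤ d * C := by positivity
    refine ⟨1 / (4 * (d * C + 1)), by positivity, ?_⟩
    rw [mul_one_div, div_le_div_iff₀ (by positivity) (by norm_num)]
    linarith
  have ev1 : ∀ᶠ t in Filter.atTop, ∀ j, ‖∫ x in Set.Ioc (0:ℝ) 1, f j x * E t x‖ ≤ r / 2 := by
    rw [Filter.eventually_all]
    intro j
    filter_upwards [NormedAddGroup.tendsto_nhds_zero.1 (RL (f j)) (r / 2) (by positivity)]
      with t ht using ht.le
  have ev2 : ∀ᶠ t in Filter.atTop, ∀ j k, ‖∫ x in Set.Ioc (0:ℝ) 1,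
      f j x * (starRingEnd ℂ) (φ k x) * E (2 * t) x‖ ≤ ε := by
    rw [Filter.eventually_all]
    intro j
    rw [Filter.eventually_all]
    intro k
    have := (RL (fun x => f j x * (starRingEnd ℂ) (φ k x))).comp
      (Filter.tendsto_id.const_mul_atTop (two_pos : (0:ℝ) < 2))
    filter_upwards [NormedAddGroup.tendsto_nhds_zero.1 this ε hε] with t ht using ht.le
  obtain ⟨t, ht1, ht2⟩ := (ev1.and ev2).exists
  let h : V → S := fun v => ⟨H t (A v).1, H_smooth t (A v).2⟩
  let Φ : V → V := fun v => (T n f hf').rangeRestrict (h v)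
  have hΦ : ∀ v j, (Φ v).1 j = ∫ x in Set.Ioc (0:ℝ) 1, f j x * H t (A v).1 x := fun v j => rfl
  have hid : ∀ (v : V) j, v.1 j = ∫ x in Set.Ioc (0:ℝ) 1, f j x * (A v).1 x := fun v j => by
    conv_lhs => rw [← hA' v]
    rfl
  obtain ⟨v, hv⟩ : ∃ v, Φ v = 0 := by
    refine zero_of_approx Φ r hr ?_ ?_
    · rw [Submodule.coe_norm, pi_norm_le_iff_of_nonneg (by positivity)]
      intro j
      rw [hΦ]
      have h0 : ∀ x, H t (A 0).1 x = E t x := by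
        intro x
        have : (A 0).1 x = 0 := by rw [map_zero]; rfl
        simp [H, P, this]
      simp_rw [h0]
      exact ht1 j
    · intro u v hu hv
      rw [Submodule.coe_norm, pi_norm_le_iff_of_nonneg (by positivity)]
      intro j
      have hAs : (A (u - v)).1 = (A u).1 - (A v).1 := by rw [map_sub]; rfl
      have cE := (E_smooth (2 * t)).continuous
      have cu := (H_smooth t (A u).2).continuous
      have cv := (H_smooth t (A v).2).continuous
      have cw := (S_smooth (A (u - v))).continuous
      have cwE : Continuous fun x => (starRingEnd ℂ) ((A (u - v)).1 x) * E (2 * t) x :=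
        (Complex.continuous_conj.comp cw).mul cE
      have iu := int_mul (hf' j) cu
      have iv := int_mul (hf' j) cv
      have iw := int_mul (hf' j) cw
      have iwE := int_mul (hf' j) cwE
      have heq : (Φ u - Φ v - (u - v)).1 j
          = (∫ x in Set.Ioc (0:ℝ) 1, f j x * (H t (A u).1 x - H t (A v).1 x - (A (u - v)).1 x
              + (starRingEnd ℂ) ((A (u - v)).1 x) * E (2 * t) x))
            - ∫ x in Set.Ioc (0:ℝ) 1, f j x * ((starRingEnd ℂ) ((A (u - v)).1 x) * E (2 * t) x) := by
        have e1 : (Φ u - Φ v - (u - v)).1 j = (Φ u).1 j - (Φ v).1 j - (u - v).1 j := rfl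
        have i1 : IntegrableOn (fun x => f j x * H t (A u).1 x - f j x * H t (A v).1 x)
          (Set.Ioc 0 1) := iu.sub iv
        have i2 : IntegrableOn (fun x => f j x * H t (A u).1 x - f j x * H t (A v).1 x
          - f j x * (A (u - v)).1 x) (Set.Ioc 0 1) := i1.sub iw
        rw [e1, hΦ, hΦ, hid (u - v), ← integral_sub iu iv, ← integral_sub i1 iw,
          eq_sub_iff_add_eq]
        rw [← integral_add i2 iwE]
        congr 1
        ext x
        ring
      have b1 : ‖∫ x in Set.Ioc (0:ℝ) 1, f j x * (H t (A u).1 x - H t (A v).1 x - (A (u - v)).1 x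
              + (starRingEnd ℂ) ((A (u - v)).1 x) * E (2 * t) x)‖ ≤ 1 / 4 * ‖u - v‖ := by
        have b2 : ‖∫ x in Set.Ioc (0:ℝ) 1, f j x * (H t (A u).1 x - H t (A v).1 x
              - (A (u - v)).1 x + (starRingEnd ℂ) ((A (u - v)).1 x) * E (2 * t) x)‖
              ≤ ∫ x in Set.Ioc (0:ℝ) 1, ‖f j x‖ * (4 * (M * r) * (M * ‖u - v‖)) := by
          refine norm_integral_le_of_norm_le ((hf' j).norm.mul_const _) ?_
          filter_upwards [ae_restrict_mem measurableSet_Ioc] with x hx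
          rw [norm_mul]
          refine mul_le_mul_of_nonneg_left ?_ (norm_nonneg _)
          have := hM (u - v) x hx
          rw [hAs] at this ⊢
          refine H_bound t _ _ x (M * r) _ ?_ ?_ this
          · exact (hM u x hx).trans (mul_le_mul_of_nonneg_left hu hM0)
          · exact (hM v x hx).trans (mul_le_mul_of_nonneg_left hv hM0)
        rw [integral_mul_const] at b2
        refine b2.trans ?_
        calc _ ≤ Q * (4 * (M * r) * (M * ‖u - v‖)) :=
              mul_le_mul_of_nonneg_right (hQj j) (by positivity)
          _ = 4 * M * M * Q * r * ‖u - v‖ := by ring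
          _ ≤ _ := mul_le_mul_of_nonneg_right hr' (norm_nonneg _)
      have b3 : ‖∫ x in Set.Ioc (0:ℝ) 1, f j x * ((starRingEnd ℂ) ((A (u - v)).1 x)
          * E (2 * t) x)‖ ≤ 1 / 4 * ‖u - v‖ := by
        have e2 : ∫ x in Set.Ioc (0:ℝ) 1, f j x * ((starRingEnd ℂ) ((A (u - v)).1 x)
            * E (2 * t) x) = ∑ k, (starRingEnd ℂ) (b.repr (u - v) k) *
              ∫ x in Set.Ioc (0:ℝ) 1, f j x * (starRingEnd ℂ) (φ k x) * E (2 * t) x := by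
          simp_rw [← integral_const_mul]
          rw [← integral_finsetSum]
          · congr 1
            ext x
            rw [hexp, map_sum, Finset.sum_mul, Finset.mul_sum]
            refine Finset.sum_congr rfl fun k _ => ?_
            rw [map_mul]
            ring
          · intro k _
            refine Integrable.const_mul ?_ _
            have := int_mul (hf' j) ((Complex.continuous_conj.comp (hφ k).continuous).mul cE)
            refine this.congr (Filter.Eventually.of_forall fun x => ?_)
            simp [mul_assoc]
        rw [e2]
        calc _ ≤ ∑ k : Fin d, C * ‖u - v‖ * ε := by
              refine norm_sum_le_of_le _ fun k _ => ?_
              rw [norm_mul, RCLike.norm_conj]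
              exact mul_le_mul (hC _ k) (ht2 j k) (norm_nonneg _) (by positivity)
          _ = d * C * ε * ‖u - v‖ := by simp; ring
          _ ≤ _ := mul_le_mul_of_nonneg_right hε1 (norm_nonneg _)
      rw [heq]
      refine (norm_sub_le _ _).trans ?_
      linarith
  refine ⟨H t (A v).1, (H_smooth t (A v).2).contDiffOn, fun x _ => norm_H _ _ _, fun j => ?_⟩
  rw [intervalIntegral.integral_of_le zero_le_one, ← hΦ, hv]
  rfl
end

section
/- Let ψ : C^∞([0,1]; S^1) → ℝ^n be a map that is continuous with respect to the L^1-norm on C^∞([0,1]; S^1) and satisfies ψ(−h) = −ψ(h) for all h ∈ C^∞([0,1]; S^1). Then there exists h ∈ C^∞([0,1]; S^1) with ψ(h) = 0 and ‖h‖_{W^{1,1}} ≤ 1 + πn. -/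
open MeasureTheory

/-- A function `h : ℝ → ℂ` represents an element of `C^∞([0,1]; S¹)`:
it is smooth on `[0,1]` and takes values in the unit circle there. -/
def SmoothCircleValued (h : ℝ → ℂ) : Prop :=
  ContDiffOn ℝ (⊤ : ℕ∞) h (Set.Icc 0 1) ∧ ∀ x ∈ Set.Icc (0:ℝ) 1, ‖h x‖ = 1


namespace BU

set_option linter.unusedSectionVars false

variable {E : Type} [NormedAddCommGroup E] [NormedSpace ℝ E]

abbrev Ch (E : Type) := List E →₀ ZMod 2

noncomputable def sg (l : List E) : Ch E := Finsupp.single l 1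

noncomputable def lext {M : Type} [AddCommGroup M] [Module (ZMod 2) M] (g : List E → M) :
    Ch E →ₗ[ZMod 2] M :=
  Finsupp.linearCombination (ZMod 2) g

lemma lext_sg {M : Type} [AddCommGroup M] [Module (ZMod 2) M] (g : List E → M) (l : List E) :
    lext g (sg l) = g l := by
  simp [lext, sg]

lemma hom_ext {M : Type} [AddCommGroup M] [Module (ZMod 2) M] {f g : Ch E →ₗ[ZMod 2] M}
    (h : ∀ l, f (sg l) = g (sg l)) : f = g := by
  apply Finsupp.lhom_ext
  intro l b
  have : (Finsupp.single l b : Ch E) = b • sg l := by simp [sg]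
  rw [this, map_smul, map_smul, h]

/-- chains supported on lists in `S` -/
noncomputable def Sup (S : Set (List E)) : Submodule (ZMod 2) (Ch E) := Submodule.span (ZMod 2) (sg '' S)

lemma sg_mem {S : Set (List E)} {l : List E} (h : l ∈ S) : sg l ∈ Sup S :=
  Submodule.subset_span ⟨l, h, rfl⟩

lemma Sup_mono {S T : Set (List E)} (h : S ⊆ T) : Sup S ≤ Sup T :=
  Submodule.span_mono (Set.image_mono h)

lemma map_sup {S T : Set (List E)} (f : Ch E →ₗ[ZMod 2] Ch E)
    (h : ∀ l ∈ S, f (sg l) ∈ Sup T) {c : Ch E} (hc : c ∈ Sup S) : f c ∈ Sup T := by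
  have : Sup S ≤ (Sup T).comap f := by
    apply Submodule.span_le.2
    rintro _ ⟨l, hl, rfl⟩
    exact h l hl
  exact this hc

lemma eq_sup {M : Type} [AddCommGroup M] [Module (ZMod 2) M] {S : Set (List E)}
    (f g : Ch E →ₗ[ZMod 2] M)
    (h : ∀ l ∈ S, f (sg l) = g (sg l)) {c : Ch E} (hc : c ∈ Sup S) : f c = g c := by
  have : Sup S ≤ LinearMap.eqLocus f g := by
    apply Submodule.span_le.2
    rintro _ ⟨l, hl, rfl⟩
    exact h l hl
  exact this hc

noncomputable def cone (v : E) : Ch E →ₗ[ZMod 2] Ch E := lext (fun l => sg (v :: l))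

lemma cone_sg (v : E) (l : List E) : cone v (sg l) = sg (v :: l) := lext_sg _ _

noncomputable def bdL : List E → Ch E
  | [] => 0
  | v :: l => sg l + cone v (bdL l)

noncomputable def bd : Ch E →ₗ[ZMod 2] Ch E := lext bdL

lemma bd_nil : bd (sg ([] : List E)) = 0 := by simp [bd, lext_sg, bdL]
lemma bd_cons (v : E) (l : List E) : bd (sg (v :: l)) = sg l + cone v (bd (sg l)) := by
  simp [bd, lext_sg, bdL]

lemma bd_cone (v : E) (c : Ch E) : bd (cone v c) = c + cone v (bd c) := by
  have : bd ∘ₗ cone v = LinearMap.id + cone v ∘ₗ bd := by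
    apply hom_ext; intro l
    simp [cone_sg, bd_cons]
  exact congrArg (fun f => f c) this

lemma ch2 (c : Ch E) : c + c = 0 := by
  ext l; exact CharTwo.add_self_eq_zero _

lemma bd_bd (c : Ch E) : bd (bd c) = 0 := by
  have : bd ∘ₗ bd = (0 : Ch E →ₗ[ZMod 2] Ch E) := by
    apply hom_ext; intro l
    induction l with
    | nil => simp [bd_nil]
    | cons v l ih =>
      simp only [LinearMap.comp_apply, LinearMap.zero_apply] at ih ⊢
      rw [bd_cons, map_add, bd_cone, ih, map_zero, add_zero, ch2]
  exact congrArg (fun f => f c) this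

noncomputable def tau : Ch E →ₗ[ZMod 2] Ch E := lext (fun l => sg (l.map (fun x => -x)))

lemma tau_sg (l : List E) : tau (sg l) = sg (l.map (fun x => -x)) := lext_sg _ _

lemma tau_cone (v : E) (c : Ch E) : tau (cone v c) = cone (-v) (tau c) := by
  have : tau ∘ₗ cone v = cone (-v) ∘ₗ tau := by
    apply hom_ext; intro l
    simp [cone_sg, tau_sg]
  exact congrArg (fun f => f c) this

lemma tau_bd (c : Ch E) : tau (bd c) = bd (tau c) := by
  have : tau ∘ₗ bd = bd ∘ₗ (tau : Ch E →ₗ[ZMod 2] Ch E) := by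
    apply hom_ext; intro l
    induction l with
    | nil => simp [bd_nil, tau_sg]
    | cons v l ih =>
      simp only [LinearMap.comp_apply] at ih ⊢
      rw [bd_cons, map_add, tau_cone, ih, tau_sg, tau_sg, List.map_cons, bd_cons]
  exact congrArg (fun f => f c) this

/-! subdivision -/

noncomputable def bary (l : List E) : E := ((l.length : ℝ)⁻¹) • l.sum

lemma bary_neg (l : List E) : bary (l.map (fun x => -x)) = - bary l := by
  unfold bary
  have : (l.map (fun x => -x)).sum = - l.sum := by
    induction l with
    | nil => simp
    | cons a l ih => simp [ih]; abel
  rw [this]; simp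

noncomputable def sd : ℕ → (Ch E →ₗ[ZMod 2] Ch E)
  | 0 => LinearMap.id
  | k + 1 => lext (fun l => cone (bary l) (sd k (bd (sg l))))

lemma sd_succ (k : ℕ) (l : List E) : sd (k+1) (sg l) = cone (bary l) (sd k (bd (sg l))) := by
  rw [sd, lext_sg]

lemma tau_sd (k : ℕ) (c : Ch E) : tau (sd k c) = sd k (tau c) := by
  have : tau ∘ₗ sd k = sd k ∘ₗ (tau : Ch E →ₗ[ZMod 2] Ch E) := by
    induction k generalizing c with
    | zero => rfl
    | succ k ih =>
      apply hom_ext; intro l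
      have ih' : ∀ c : Ch E, tau (sd k c) = sd k (tau c) :=
        fun c => congrArg (fun f => f c) (ih c)
      simp only [LinearMap.comp_apply]
      rw [sd_succ, tau_cone, ih', tau_bd, tau_sg, sd_succ, bary_neg]
  exact congrArg (fun f => f c) this

lemma bd_supp (k : ℕ) (l : List E) (hl : l.length = k + 1) :
    bd (sg l) ∈ Sup {l' : List E | l'.length = k ∧ l' ⊆ l} := by
  induction l generalizing k with
  | nil => simp at hl
  | cons v l ih =>
    rw [bd_cons]
    simp only [List.length_cons, Nat.add_right_cancel_iff] at hl
    apply Submodule.add_mem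
    · exact sg_mem ⟨hl, List.subset_cons_self v l⟩
    · cases k with
      | zero =>
        have : l = [] := List.length_eq_zero_iff.1 hl
        subst this
        simp [bd_nil]
      | succ k =>
        refine map_sup _ ?_ (ih k hl)
        rintro l' ⟨h1, h2⟩
        rw [cone_sg]
        exact sg_mem ⟨by simp [h1], List.cons_subset_cons v h2⟩

/-- lists of length k -/
def Len (E : Type) (k : ℕ) : Set (List E) := {l | l.length = k}

lemma bd_len (k : ℕ) {c : Ch E} (hc : c ∈ Sup (Len E (k+1))) : bd c ∈ Sup (Len E k) :=
  map_sup bd (fun l hl => Sup_mono (fun _ h => h.1) (bd_supp k l hl)) hc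

lemma bd_sd (k : ℕ) {c : Ch E} (hc : c ∈ Sup (Len E (k+1))) :
    bd (sd (k+1) c) = sd k (bd c) := by
  induction k generalizing c with
  | zero =>
    change (bd ∘ₗ sd (0+1)) c = (sd 0 ∘ₗ bd) c
    apply eq_sup (hc := hc)
    intro l hl
    obtain ⟨v, rfl⟩ := List.length_eq_one_iff.1 hl
    simp only [LinearMap.comp_apply]
    rw [sd_succ, bd_cons, bd_nil]
    simp [sd, cone_sg, bd_cons, bd_nil]
  | succ k ih =>
    change (bd ∘ₗ sd (k+1+1)) c = (sd (k+1) ∘ₗ bd) c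
    apply eq_sup (hc := hc)
    intro l hl
    simp only [LinearMap.comp_apply]
    rw [sd_succ, bd_cone, ih (bd_len (k+1) (sg_mem hl)), bd_bd, map_zero, map_zero, add_zero]

def Fine (K : Set E) (δ : ℝ) (k : ℕ) : Set (List E) :=
  {l | l.length = k ∧ (∀ x ∈ l, x ∈ K) ∧ ∀ x ∈ l, ∀ y ∈ l, ‖x - y‖ ≤ δ}

lemma sum_norm_le (l : List E) (v : E) (hv : v ∈ l) (δ : ℝ)
    (h : ∀ x ∈ l, ‖x - v‖ ≤ δ) : ‖l.sum - (l.length : ℝ) • v‖ ≤ ((l.length : ℝ) - 1) * δ := by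
  classical
  have key : ∀ m : List E, (∀ x ∈ m, ‖x - v‖ ≤ δ) →
      ‖m.sum - (m.length : ℝ) • v‖ ≤ (m.length : ℝ) * δ := by
    intro m
    induction m with
    | nil => intro _; simp
    | cons a m ih =>
      intro hm
      have h1 := ih (fun x hx => hm x (by simp [hx]))
      have h2 := hm a (by simp)
      have : (a :: m).sum - ((a :: m).length : ℝ) • v
          = (a - v) + (m.sum - (m.length : ℝ) • v) := by
        simp [add_smul]; abel
      rw [this]
      refine (norm_add_le _ _).trans ?_
      push_cast [List.length_cons]; linarith
  have hp := List.perm_cons_erase hv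
  have h1 := key (l.erase v) (fun x hx => h x (List.mem_of_mem_erase hx))
  rw [hp.sum_eq, hp.length_eq]
  have : (v :: l.erase v).sum - (((v :: l.erase v).length : ℕ) : ℝ) • v
      = (l.erase v).sum - ((l.erase v).length : ℝ) • v := by
    simp [add_smul]; abel
  rw [this]
  refine h1.trans (le_of_eq ?_)
  simp

lemma bary_dist (l : List E) (v : E) (hv : v ∈ l) (δ : ℝ) (hδ : 0 ≤ δ)
    (h : ∀ x ∈ l, ‖x - v‖ ≤ δ) (N : ℕ) (hN : l.length ≤ N + 1) :
    ‖v - bary l‖ ≤ (N / (N + 1) : ℝ) * δ := by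
  have h0 : (0 : ℝ) < l.length := by
    exact_mod_cast List.length_pos_of_mem hv
  have h1 := sum_norm_le l v hv δ h
  have : v - bary l = -((l.length : ℝ)⁻¹ • (l.sum - (l.length : ℝ) • v)) := by
    rw [smul_sub, smul_smul, inv_mul_cancel₀ h0.ne', one_smul, bary]; abel
  rw [this, norm_neg, norm_smul, norm_inv, Real.norm_of_nonneg h0.le]
  have h2 : (l.length : ℝ)⁻¹ * ‖l.sum - (l.length : ℝ) • v‖
      ≤ (l.length : ℝ)⁻¹ * (((l.length : ℝ) - 1) * δ) := by gcongr
  refine h2.trans ?_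
  rw [← mul_assoc]
  gcongr
  have h3 : (l.length : ℝ) ≤ N + 1 := by exact_mod_cast hN
  rw [inv_mul_le_iff₀ h0, mul_div_assoc', le_div_iff₀ (by positivity)]
  nlinarith

lemma bary_mem (l : List E) (hl : l ≠ []) (K : Set E) (hK : Convex ℝ K) (h : ∀ x ∈ l, x ∈ K) :
    bary l ∈ K := by
  have hlen : (0 : ℝ) < l.length := by
    exact_mod_cast List.length_pos_of_ne_nil hl
  have : bary l = ∑ i : Fin l.length, ((l.length : ℝ)⁻¹) • l.get i := by
    rw [← Finset.smul_sum, bary]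
    congr 1
    simp [← List.sum_ofFn]
  rw [this]
  apply hK.sum_mem
  · intro i _; positivity
  · simp [hlen.ne']
  · intro i _; exact h _ (List.get_mem _ _)

lemma sd_fine (N k : ℕ) (hk : k ≤ N + 1) (K : Set E) (hK : Convex ℝ K) (δ : ℝ) (hδ : 0 ≤ δ)
    (l : List E) (hl : l ∈ Fine K δ k) :
    sd k (sg l) ∈ Sup (Fine K ((N / (N + 1) : ℝ) * δ) k) := by
  induction k generalizing K l with
  | zero =>
    have : l = [] := List.length_eq_zero_iff.1 hl.1
    subst this
    exact sg_mem ⟨rfl, by simp, by simp⟩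
  | succ k ih =>
    obtain ⟨h1, h2, h3⟩ := hl
    rw [sd_succ]
    have hne : l ≠ [] := by rintro rfl; simp at h1
    set r : ℝ := (N / (N + 1) : ℝ) with hr
    set K' : Set E := K ∩ Metric.closedBall (bary l) (r * δ) with hK'
    have hconv : Convex ℝ K' := hK.inter (convex_closedBall _ _)
    have hlK' : ∀ x ∈ l, x ∈ K' := by
      intro x hx
      refine ⟨h2 x hx, ?_⟩
      rw [mem_closedBall_iff_norm]
      exact bary_dist l x hx δ hδ (fun y hy => h3 y hy x hx) N (by omega)
    have hb := bd_supp k l h1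
    have hc : sd k (bd (sg l)) ∈ Sup (Fine K' (r * δ) k) := by
      refine map_sup _ ?_ hb
      rintro l' ⟨g1, g2⟩
      exact ih (by omega) K' hconv l' ⟨g1, fun x hx => hlK' x (g2 hx),
        fun x hx y hy => h3 x (g2 hx) y (g2 hy)⟩
    refine map_sup _ ?_ hc
    rintro m ⟨m1, m2, m3⟩
    rw [cone_sg]
    have hrd : 0 ≤ r * δ := by positivity
    refine sg_mem ⟨by simp [m1], ?_, ?_⟩
    · intro x hx
      rcases List.mem_cons.1 hx with rfl | hx
      · exact bary_mem l hne K hK h2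
      · exact (m2 x hx).1
    · intro x hx y hy
      rcases List.mem_cons.1 hx with rfl | hx <;> rcases List.mem_cons.1 hy with rfl | hy
      · simpa using hrd
      · rw [← norm_neg, neg_sub]; exact mem_closedBall_iff_norm.1 (m2 y hy).2
      · exact mem_closedBall_iff_norm.1 (m2 x hx).2
      · exact m3 x hx y hy

lemma sd_len (k : ℕ) {c : Ch E} (hc : c ∈ Sup (Len E k)) : sd k c ∈ Sup (Len E k) := by
  refine map_sup _ ?_ hc
  clear hc
  induction k with
  | zero => intro l hl; exact sg_mem hl
  | succ k ih =>
    intro l hl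
    rw [sd_succ]
    have h1 : sd k (bd (sg l)) ∈ Sup (Len E k) := map_sup _ ih (bd_len k (sg_mem hl))
    refine map_sup _ ?_ h1
    intro m hm
    rw [cone_sg]
    have hm' : m.length = k := hm
    exact sg_mem (show (_ :: m).length = k + 1 by simp [hm'])

noncomputable def sdr (k r : ℕ) : Ch E →ₗ[ZMod 2] Ch E := (sd k) ^ r

lemma sdr_succ (k r : ℕ) (c : Ch E) : sdr k (r+1) c = sd k (sdr k r c) := by
  rw [sdr, pow_succ', sdr]; rfl

lemma sdr_zero (k : ℕ) (c : Ch E) : sdr k 0 c = c := by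
  rw [sdr, pow_zero]; rfl

lemma sdr_len (k r : ℕ) {c : Ch E} (hc : c ∈ Sup (Len E k)) : sdr k r c ∈ Sup (Len E k) := by
  induction r with
  | zero => rwa [sdr_zero]
  | succ r ih => rw [sdr_succ]; exact sd_len k ih

lemma bd_sdr (k r : ℕ) {c : Ch E} (hc : c ∈ Sup (Len E (k+1))) :
    bd (sdr (k+1) r c) = sdr k r (bd c) := by
  induction r with
  | zero => rw [sdr_zero, sdr_zero]
  | succ r ih => rw [sdr_succ, sdr_succ, bd_sd k (sdr_len _ r hc), ih]

lemma tau_sdr (k r : ℕ) (c : Ch E) : tau (sdr k r c) = sdr k r (tau c) := by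
  induction r with
  | zero => rw [sdr_zero, sdr_zero]
  | succ r ih => rw [sdr_succ, sdr_succ, tau_sd, ih]

/-! cochains -/

noncomputable def phiOf (s : E → ZMod 2) (W : Ch E →ₗ[ZMod 2] ZMod 2) : Ch E →ₗ[ZMod 2] ZMod 2 :=
  lext (fun l => match l with
    | [] => 0
    | v :: l' => s v * W (sg (v :: l')))

noncomputable def W (s : ℕ → E → ZMod 2) : ℕ → (Ch E →ₗ[ZMod 2] ZMod 2)
  | 0 => lext (fun l => if l.length = 1 then 1 else 0)
  | k + 1 => phiOf (s k) (W s k) ∘ₗ bd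

lemma phi_nil (s : E → ZMod 2) (w : Ch E →ₗ[ZMod 2] ZMod 2) : phiOf s w (sg []) = 0 := lext_sg _ _
lemma phi_cons (s : E → ZMod 2) (w : Ch E →ₗ[ZMod 2] ZMod 2) (v : E) (l : List E) :
    phiOf s w (sg (v :: l)) = s v * w (sg (v :: l)) := lext_sg _ _
lemma phi_cone (s : E → ZMod 2) (w : Ch E →ₗ[ZMod 2] ZMod 2) (v : E) (c : Ch E) :
    phiOf s w (cone v c) = s v * w (cone v c) := by
  have : phiOf s w ∘ₗ cone v = s v • (w ∘ₗ cone v) := by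
    apply hom_ext; intro l
    simp [cone_sg, phi_cons]
  exact congrArg (fun f => f c) this

lemma W_succ (s : ℕ → E → ZMod 2) (k : ℕ) (c : Ch E) :
    W s (k+1) c = phiOf (s k) (W s k) (bd c) := rfl

lemma W_zero_sg (s : ℕ → E → ZMod 2) (l : List E) :
    W s 0 (sg l) = if l.length = 1 then 1 else 0 := by rw [W, lext_sg]

lemma W_nil (s : ℕ → E → ZMod 2) (k : ℕ) : W s k (sg []) = 0 := by
  cases k with
  | zero => simp [W_zero_sg]
  | succ k => rw [W_succ, bd_nil, map_zero]

lemma W_bd (s : ℕ → E → ZMod 2) (k : ℕ) (c : Ch E) : W s k (bd c) = 0 := by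
  cases k with
  | succ k => rw [W_succ, bd_bd, map_zero]
  | zero =>
    have hz : ∀ (v : E) (c : Ch E), c ∈ Sup {l : List E | l ≠ []} → W s 0 (cone v c) = 0 := by
      intro v c hc
      change ((W s 0) ∘ₗ cone v) c = (0 : Ch E →ₗ[ZMod 2] ZMod 2) c
      apply eq_sup (hc := hc)
      intro l hl
      simpa [cone_sg, W_zero_sg] using hl
    have : W s 0 ∘ₗ bd = 0 := by
      apply hom_ext; intro l
      match l with
      | [] => simp [bd_nil]
      | [v] => simp [bd_cons, bd_nil, W_zero_sg]
      | [v, w] => 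
        simp [bd_cons, bd_nil, cone_sg, W_zero_sg]
        exact CharTwo.add_self_eq_zero _
      | v :: w :: x :: l =>
        rw [LinearMap.comp_apply, bd_cons, map_add, hz]
        · simp [W_zero_sg]
        · refine Sup_mono ?_ (bd_supp (l.length + 1) (w :: x :: l) (by simp))
          rintro m ⟨h1, -⟩ rfl
          simp at h1
    exact congrArg (fun f => f c) this

lemma W_single (s : ℕ → E → ZMod 2) (k : ℕ) (v : E) : W s (k+1) (sg [v]) = 0 := by
  rw [W_succ, bd_cons, bd_nil, map_zero, add_zero, phi_nil]

lemma W_cons2 (s : ℕ → E → ZMod 2) (k : ℕ) (v w : E) (l : List E) :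
    W s (k+1) (sg (v :: w :: l)) = (s k v + s k w) * W s k (sg (w :: l)) := by
  have h := W_bd s k (sg (v :: w :: l))
  rw [bd_cons, map_add] at h
  rw [W_succ, bd_cons, map_add, phi_cons, phi_cone]
  have h' : W s k (cone v (bd (sg (w :: l)))) = W s k (sg (w :: l)) := by
    have h2 := CharTwo.add_self_eq_zero (W s k (sg (w :: l)))
    exact add_left_cancel (h.trans h2.symm)
  rw [h']; ring

lemma W_neg (s : ℕ → E → ZMod 2) (hs : ∀ k v, v ≠ 0 → s k (-v) = s k v + 1) (k : ℕ) (l : List E)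
    (hl : ∀ x ∈ l, x ≠ 0) : W s k (sg (l.map (fun x => -x))) = W s k (sg l) := by
  induction k generalizing l with
  | zero => simp [W_zero_sg]
  | succ k ih =>
    match l with
    | [] => simp
    | [v] => simp [W_single]
    | v :: w :: l =>
      have h := ih (w :: l) (fun x hx => hl x (List.mem_cons_of_mem _ hx))
      simp only [List.map_cons] at h ⊢
      rw [W_cons2, W_cons2, h, hs k v (hl v (by simp)), hs k w (hl w (by simp))]
      have : (1 : ZMod 2) + 1 = 0 := rfl
      linear_combination (W s k (sg (w :: l))) * this

lemma phi_tau (s : ℕ → E → ZMod 2) (hs : ∀ k v, v ≠ 0 → s k (-v) = s k v + 1) (k : ℕ) (c : Ch E)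
    (hc : c ∈ Sup {l : List E | ∀ x ∈ l, x ≠ 0}) :
    phiOf (s k) (W s k) (c + tau c) = W s k c := by
  change (phiOf (s k) (W s k) ∘ₗ (LinearMap.id + tau)) c = W s k c
  apply eq_sup (hc := hc)
  intro l hl
  match l with
  | [] => 
    simp [tau_sg, phi_nil, W_nil]
  | v :: l =>
    have h := W_neg s hs k _ hl
    simp only [LinearMap.comp_apply, LinearMap.add_apply, LinearMap.id_apply, map_add, tau_sg]
    simp only [List.map_cons] at h ⊢
    rw [phi_cons, phi_cons, h, hs k v (hl v (by simp))]
    have : (1 : ZMod 2) + 1 = 0 := rfl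
    linear_combination (s k v * W s k (sg (v :: l))) * this

lemma W_ne (s : ℕ → E → ZMod 2) (k : ℕ) (l : List E) (h : W s k (sg l) ≠ 0) :
    ∀ j < k, ∃ u ∈ l, ∃ w ∈ l, s j u ≠ s j w := by
  induction k generalizing l with
  | zero => simp
  | succ k ih =>
    match l with
    | [] => exact absurd (W_nil s _) h
    | [v] => exact absurd (W_single s _ _) h
    | v :: w :: l =>
      rw [W_cons2] at h
      intro j hj
      rcases Nat.lt_succ_iff_lt_or_eq.1 hj with hj | rfl
      · obtain ⟨a, ha, b, hb, hab⟩ := ih _ (right_ne_zero_of_mul h) j hj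
        exact ⟨a, List.mem_cons_of_mem _ ha, b, List.mem_cons_of_mem _ hb, hab⟩
      · refine ⟨v, by simp, w, by simp, ?_⟩
        intro heq
        apply left_ne_zero_of_mul h
        rw [heq]; exact CharTwo.add_self_eq_zero _

/-! octahedral chains -/

noncomputable def A (e : ℕ → E) : ℕ → Ch E
  | 0 => sg []
  | k + 1 => cone (e k) (A e k) + cone (-e k) (A e k)

noncomputable def cc (e : ℕ → E) (k : ℕ) : Ch E := cone (e k) (A e k)

lemma A_tau (e : ℕ → E) (k : ℕ) : tau (A e k) = A e k := by
  induction k with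
  | zero => simp [A, tau_sg]
  | succ k ih => rw [A, map_add, tau_cone, tau_cone, ih, neg_neg, add_comm]

lemma A_bd (e : ℕ → E) (k : ℕ) : bd (A e k) = 0 := by
  induction k with
  | zero => simp [A, bd_nil]
  | succ k ih => rw [A, map_add, bd_cone, bd_cone, ih]; simp [ch2]

lemma A_succ (e : ℕ → E) (k : ℕ) : A e (k+1) = cc e k + tau (cc e k) := by
  rw [cc, tau_cone, A_tau, A]

lemma cc_bd (e : ℕ → E) (k : ℕ) : bd (cc e k) = A e k := by
  rw [cc, bd_cone, A_bd]; simp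

lemma cone_len (v : E) (k : ℕ) {c : Ch E} (hc : c ∈ Sup (Len E k)) :
    cone v c ∈ Sup (Len E (k+1)) := by
  refine map_sup _ ?_ hc
  intro m hm
  rw [cone_sg]
  have hm' : m.length = k := hm
  exact sg_mem (show (_ :: m).length = k + 1 by simp [hm'])

lemma A_len (e : ℕ → E) (k : ℕ) : A e k ∈ Sup (Len E k) := by
  induction k with
  | zero => exact sg_mem rfl
  | succ k ih => exact Submodule.add_mem _ (cone_len _ _ ih) (cone_len _ _ ih)

lemma W_cc (s : ℕ → E → ZMod 2) (hs : ∀ k v, v ≠ 0 → s k (-v) = s k v + 1) (e : ℕ → E) (r n : ℕ)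
    (H : ∀ k ≤ n, sdr (k+1) r (cc e k) ∈ Sup {l : List E | ∀ x ∈ l, x ≠ 0}) :
    ∀ k ≤ n, W s k (sdr (k+1) r (cc e k)) = 1 := by
  intro k
  induction k with
  | zero =>
    intro _
    have : sdr 1 r (cc e 0) = cc e 0 := by
      induction r with
      | zero => rw [sdr_zero]
      | succ r ih =>
        have h1 : sd 1 (cc e 0) = cc e 0 := by
          rw [cc, A, cone_sg]
          rw [show (1 : ℕ) = 0 + 1 from rfl, sd_succ, bd_cons, bd_nil]
          simp [sd, cone_sg, bary]
        have h2 : ∀ r, sdr 1 r (cc e 0) = cc e 0 := by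
          intro r
          induction r with
          | zero => rw [sdr_zero]
          | succ r ih => rw [sdr_succ, ih, h1]
        exact h2 _
    rw [zero_add, this, cc, A, cone_sg, W_zero_sg]; simp
  | succ k ih =>
    intro hk
    rw [W_succ, bd_sdr (c := cc e (k+1)) _ _ (cone_len _ _ (A_len e (k+1))), cc_bd, A_succ, map_add, ← tau_sdr,
      phi_tau s hs k _ (H k (by omega)), ih (by omega)]

/-! geometry -/

noncomputable def ev (n : ℕ) (k : ℕ) : Fin (n+1) → ℝ :=
  if h : k < n + 1 then Pi.single ⟨k, h⟩ 1 else 0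

def Orth (n : ℕ) (ε : Fin (n+1) → ℝ) : Set (Fin (n+1) → ℝ) :=
  {x | (∀ i, 0 ≤ ε i * x i) ∧ ∑ i, ε i * x i = 1}

lemma orth_convex (n : ℕ) (ε : Fin (n+1) → ℝ) : Convex ℝ (Orth n ε) := by
  rintro x ⟨hx, hx'⟩ y ⟨hy, hy'⟩ a b ha hb hab
  constructor
  · intro i
    have h1 := mul_nonneg ha (hx i)
    have h2 := mul_nonneg hb (hy i)
    simp only [Pi.add_apply, Pi.smul_apply, smul_eq_mul]
    linarith
  · have : ∀ i, ε i * (a • x + b • y) i = a * (ε i * x i) + b * (ε i * y i) := by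
      intro i; simp only [Pi.add_apply, Pi.smul_apply, smul_eq_mul]; ring
    simp_rw [this, Finset.sum_add_distrib, ← Finset.mul_sum, hx', hy']
    linarith

def Kc (n : ℕ) : Set (Fin (n+1) → ℝ) := {x | ∑ i, |x i| = 1}

lemma Kc_le {n : ℕ} {x : Fin (n+1) → ℝ} (hx : x ∈ Kc n) : ‖x‖ ≤ 1 := by
  rw [pi_norm_le_iff_of_nonneg zero_le_one]
  intro i
  have h : ∑ i, |x i| = 1 := hx
  rw [Real.norm_eq_abs, ← h]
  exact Finset.single_le_sum (f := fun i => |x i|) (fun i _ => abs_nonneg _) (Finset.mem_univ i)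

lemma Kc_compact (n : ℕ) : IsCompact (Kc n) := by
  apply Metric.isCompact_of_isClosed_isBounded
  · exact isClosed_eq (by fun_prop) (by fun_prop)
  · apply (Metric.isBounded_closedBall (x := (0 : Fin (n+1) → ℝ)) (r := 1)).subset
    intro x hx
    simpa using Kc_le hx

lemma Kc_ne {n : ℕ} {x : Fin (n+1) → ℝ} (hx : x ∈ Kc n) : x ≠ 0 := by
  rintro rfl
  simp [Kc] at hx

lemma orth_sub {n : ℕ} {ε : Fin (n+1) → ℝ} (hε : ∀ i, |ε i| = 1) : Orth n ε ⊆ Kc n := by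
  rintro x ⟨hx, hx'⟩
  change _ = _
  rw [← hx']
  apply Finset.sum_congr rfl
  intro i _
  rw [← abs_of_nonneg (hx i), abs_mul, hε, one_mul]

def Vl (n k : ℕ) : Set (List (Fin (n+1) → ℝ)) :=
  {l | l.length = k ∧ ∃ ε : Fin (n+1) → ℝ, (∀ i, |ε i| = 1) ∧
    ∀ x ∈ l, ∃ i : Fin (n+1), i.1 < k ∧ x = Pi.single i (ε i)}

lemma cone_V (n k : ℕ) (hk : k < n + 1) (t : ℝ) (ht : |t| = 1) {c : Ch (Fin (n+1) → ℝ)}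
    (hc : c ∈ Sup (Vl n k)) : cone (Pi.single ⟨k, hk⟩ t) c ∈ Sup (Vl n (k+1)) := by
  refine map_sup _ ?_ hc
  rintro l ⟨h1, ε, h2, h3⟩
  rw [cone_sg]
  refine sg_mem ⟨by simp [h1], Function.update ε ⟨k, hk⟩ t, ?_, ?_⟩
  · intro i
    by_cases h : i = ⟨k, hk⟩
    · subst h; simpa using ht
    · rw [Function.update_of_ne h]; exact h2 i
  · intro x hx
    rcases List.mem_cons.1 hx with rfl | hx
    · exact ⟨⟨k, hk⟩, by simp, by simp⟩
    · obtain ⟨i, hi, rfl⟩ := h3 x hx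
      refine ⟨i, by omega, ?_⟩
      rw [Function.update_of_ne]
      rintro rfl
      simp at hi

lemma A_V (n k : ℕ) (hk : k ≤ n + 1) : A (ev n) k ∈ Sup (Vl n k) := by
  induction k with
  | zero => exact sg_mem ⟨rfl, fun _ => 1, by simp, by simp⟩
  | succ k ih =>
    have h : k < n + 1 := by omega
    rw [A]
    apply Submodule.add_mem
    · rw [ev, dif_pos h]
      exact cone_V n k h 1 (by simp) (ih (by omega))
    · rw [ev, dif_pos h, ← Pi.single_neg]
      exact cone_V n k h (-1) (by simp) (ih (by omega))

lemma cc_V (n k : ℕ) (hk : k ≤ n) : cc (ev n) k ∈ Sup (Vl n (k+1)) := by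
  have h : k < n + 1 := by omega
  rw [cc, ev, dif_pos h]
  exact cone_V n k h 1 (by simp) (A_V n k (by omega))

def Fo (n k : ℕ) (δ : ℝ) : Set (List (Fin (n+1) → ℝ)) :=
  {l | ∃ ε : Fin (n+1) → ℝ, (∀ i, |ε i| = 1) ∧ l ∈ Fine (Orth n ε) δ k}

lemma cc_F (n k : ℕ) (hk : k ≤ n) : cc (ev n) k ∈ Sup (Fo n (k+1) 2) := by
  refine Sup_mono ?_ (cc_V n k hk)
  rintro l ⟨h1, ε, h2, h3⟩
  have hO : ∀ x ∈ l, x ∈ Orth n ε := by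
    intro x hx
    obtain ⟨i, -, rfl⟩ := h3 x hx
    have he : ∀ i, ε i * ε i = 1 := fun i => by rw [← abs_mul_abs_self, h2]; norm_num
    have hh : ∀ j, ε j * (Pi.single i (ε i) : Fin (n+1) → ℝ) j = if j = i then 1 else 0 := by
      intro j
      by_cases hj : j = i
      · subst hj; simp [he]
      · simp [hj]
    constructor
    · intro j; rw [hh]; split_ifs <;> norm_num
    · simp [hh]
  refine ⟨ε, h2, h1, hO, ?_⟩
  intro x hx y hy
  have a1 := Kc_le (orth_sub h2 (hO x hx))
  have a2 := Kc_le (orth_sub h2 (hO y hy))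
  linarith [norm_sub_le x y]

lemma sdr_F (n k : ℕ) (hk : k ≤ n) (r : ℕ) :
    sdr (k+1) r (cc (ev n) k) ∈ Sup (Fo n (k+1) ((n / (n + 1) : ℝ)^r * 2)) := by
  induction r with
  | zero => rw [sdr_zero]; simpa using cc_F n k hk
  | succ r ih =>
    rw [sdr_succ]
    refine map_sup _ ?_ ih
    rintro l ⟨ε, hε, hl⟩
    have h := sd_fine n (k+1) (by omega) (Orth n ε) (orth_convex n ε) _ (by positivity) l hl
    refine Sup_mono ?_ h
    intro m hm
    refine ⟨ε, hε, ?_⟩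
    rwa [pow_succ', mul_assoc]

lemma exists_sign_aux (G : Type) [AddCommGroup G] [LinearOrder G] [IsOrderedAddMonoid G] :
    ∃ t : G → ZMod 2, ∀ v, v ≠ 0 → t (-v) = t v + 1 := by
  classical
  refine ⟨fun v => if 0 < v then 1 else 0, ?_⟩
  intro v hv
  rcases lt_or_gt_of_ne hv with h | h
  · simp [h, not_lt.2 h.le]
  · simp [h, not_lt.2 h.le]; rfl

lemma exists_sign (n : ℕ) : ∃ t : (Fin (n+1) → ℝ) → ZMod 2, ∀ v, v ≠ 0 → t (-v) = t v + 1 :=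
  exists_sign_aux (Lex (Fin (n+1) → ℝ))

lemma exists_s (n : ℕ) (f : (Fin (n+1) → ℝ) → (Fin n → ℝ)) (hodd : ∀ x ≠ 0, f (-x) = - f x) :
    ∃ s : ℕ → (Fin (n+1) → ℝ) → ZMod 2, (∀ k v, v ≠ 0 → s k (-v) = s k v + 1) ∧
      ∀ (k : Fin n) u v, s k u ≠ s k v → |f u k| ≤ |f u k - f v k| := by
  classical
  obtain ⟨t, ht⟩ := exists_sign n
  refine ⟨fun k v => if h : k < n then
    (if 0 < f v ⟨k, h⟩ then 1 else if f v ⟨k, h⟩ < 0 then 0 else t v) else t v, ?_, ?_⟩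
  · intro k v hv
    by_cases h : k < n
    · simp only [h, dif_pos, hodd v hv, Pi.neg_apply, Left.neg_pos_iff, Left.neg_neg_iff]
      rcases lt_trichotomy (f v ⟨k, h⟩) 0 with h1 | h1 | h1
      · simp [h1, not_lt.2 h1.le]
      · simp [h1, ht v hv]
      · simp [h1, not_lt.2 h1.le]; rfl
    · simp [h, ht v hv]
  · rintro ⟨k, h⟩ u v huv
    simp only [h, dif_pos] at huv
    rcases lt_trichotomy (f u ⟨k, h⟩) 0 with h1 | h1 | h1
    · have h2 : 0 ≤ f v ⟨k, h⟩ := by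
        by_contra hc
        push Not at hc
        simp [h1, hc, not_lt.2 h1.le, not_lt.2 hc.le] at huv
      rw [abs_of_neg h1, abs_of_neg (by linarith)]; linarith
    · rw [h1]; simp
    · have h2 : f v ⟨k, h⟩ ≤ 0 := by
        by_contra hc
        push Not at hc
        simp [h1, hc] at huv
      rw [abs_of_pos h1, abs_of_pos (by linarith)]; linarith

theorem borsuk_ulam (n : ℕ) (f : (Fin (n+1) → ℝ) → (Fin n → ℝ)) (hf : ContinuousOn f {0}ᶜ)
    (hodd : ∀ x ≠ 0, f (-x) = - f x) : ∃ x ≠ 0, f x = 0 := by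
  by_contra hcon
  push Not at hcon
  have hfK : ContinuousOn f (Kc n) := hf.mono (fun x hx => Kc_ne hx)
  have hKne : (Kc n).Nonempty := ⟨Pi.single 0 1, by
    change ∑ i, |(Pi.single 0 1 : Fin (n+1) → ℝ) i| = 1
    rw [Finset.sum_eq_single 0] <;> simp +contextual⟩
  obtain ⟨x0, hx0, hmin⟩ := (Kc_compact n).exists_isMinOn hKne hfK.norm
  have hδ : 0 < ‖f x0‖ := norm_pos_iff.2 (hcon x0 (Kc_ne hx0))
  set δ := ‖f x0‖ with hδdef
  have huc := (Kc_compact n).uniformContinuousOn_of_continuous hfK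
  rw [Metric.uniformContinuousOn_iff] at huc
  obtain ⟨η, hη, huc⟩ := huc (δ/2) (by linarith)
  obtain ⟨r, hr⟩ := exists_pow_lt_of_lt_one (show 0 < η / 2 by linarith)
    (show (n / (n + 1) : ℝ) < 1 by rw [div_lt_one (by positivity)]; linarith)
  obtain ⟨s, hs1, hs2⟩ := exists_s n f hodd
  have hW := W_cc s hs1 (ev n) r n (by
    intro k hk
    refine Sup_mono ?_ (sdr_F n k hk r)
    rintro l ⟨ε, hε, hl⟩ x hx
    exact Kc_ne (orth_sub hε (hl.2.1 x hx))) n le_rfl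
  have hex : ∃ l ∈ Fo n (n+1) ((n / (n + 1) : ℝ)^r * 2), W s n (sg l) ≠ 0 := by
    by_contra hc
    push Not at hc
    have := eq_sup (W s n) 0 (by simpa using hc) (sdr_F n n le_rfl r)
    rw [hW] at this
    simp at this
  obtain ⟨l, ⟨ε, hε, hl1, hl2, hl3⟩, hl⟩ := hex
  have hKl : ∀ x ∈ l, x ∈ Kc n := fun x hx => orth_sub hε (hl2 x hx)
  obtain ⟨v, hv⟩ := List.exists_mem_of_length_pos (l := l) (by omega)
  have hclose : ∀ x ∈ l, ∀ y ∈ l, ∀ k, |f x k - f y k| < δ / 2 := by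
    intro x hx y hy k
    have h1 := huc x (hKl x hx) y (hKl y hy) (by
      rw [dist_eq_norm]; linarith [hl3 x hx y hy])
    rw [dist_eq_norm] at h1
    exact (norm_le_pi_norm (f x - f y) k).trans_lt h1
  have hlt : ‖f v‖ < δ := by
    rw [pi_norm_lt_iff hδ]
    intro k
    obtain ⟨u, hu, w, hw, huw⟩ := W_ne s n l hl k k.2
    have h1 := hs2 k u w huw
    have h2 := hclose u hu w hw k
    have h3 := hclose v hv u hu k
    have h4 : |f v k| ≤ |f v k - f u k| + |f u k| := by
      have := abs_add_le (f v k - f u k) (f u k)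
      simpa using this
    rw [Real.norm_eq_abs]; linarith
  exact absurd (hmin (hKl v hv)) (not_le.2 hlt)

end BU

namespace LL

open Filter Topology

noncomputable def ga {m : ℕ} (v : Fin (m+2) → ℂ) : ℂ :=
  v 0 / ((‖v 0‖ + ‖Fin.tail v‖ : ℝ) : ℂ)

noncomputable def ee (y : ℝ) : ℂ := Complex.exp ((2 * Real.pi * y : ℝ) * Complex.I)

noncomputable def F : (m : ℕ) → (Fin (m+1) → ℂ) → ℝ → ℂ
  | 0, v, _ => v 0 / (‖v 0‖ : ℂ)
  | m + 1, v, y => (ga v + ee y * F m (Fin.tail v) y) /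
      (1 + (starRingEnd ℂ) (ga v) * (ee y * F m (Fin.tail v) y))

/-- Moebius map lifted to phases -/
noncomputable def G (g : ℂ) (s : ℝ) : ℝ :=
  s - 2 * (Complex.log (1 + (starRingEnd ℂ) g * Complex.exp (s * Complex.I))).im

lemma slit (a : ℂ) (ha : ‖a‖ < 1) : 1 + a ∈ Complex.slitPlane := by
  left
  have := (abs_le.1 (Complex.abs_re_le_norm a)).1
  simp; linarith

lemma norm_ce (g : ℂ) (s : ℝ) : ‖(starRingEnd ℂ) g * Complex.exp (s * Complex.I)‖ = ‖g‖ := by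
  rw [norm_mul, Complex.norm_exp_ofReal_mul_I, mul_one]; simp

lemma G_smooth (g : ℂ) (hg : ‖g‖ < 1) : ContDiff ℝ (⊤ : ℕ∞) (G g) := by
  unfold G
  have h1 : ContDiff ℝ (⊤ : ℕ∞)
      (fun s : ℝ => 1 + (starRingEnd ℂ) g * Complex.exp (s * Complex.I)) := by
    have : ContDiff ℝ (⊤ : ℕ∞) (fun s : ℝ => (s : ℂ)) := Complex.ofRealCLM.contDiff
    fun_prop
  have h2 : ContDiff ℝ (⊤ : ℕ∞)
      (fun s : ℝ => Complex.log (1 + (starRingEnd ℂ) g * Complex.exp (s * Complex.I))) := by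
    rw [contDiff_iff_contDiffAt]
    intro s
    have := (Complex.contDiffAt_log (n := (⊤ : ℕ∞))
      (slit _ (by rw [norm_ce g s]; exact hg))).restrict_scalars ℝ
    exact this.comp s h1.contDiffAt
  have h3 := Complex.imCLM.contDiff.comp h2
  exact contDiff_id.sub (contDiff_const.mul h3)

lemma G_mono (g : ℂ) (hg : ‖g‖ < 1) : Monotone (G g) := by
  apply monotone_of_deriv_nonneg ((G_smooth g hg).differentiable (by simp))
  intro s
  set a : ℂ := (starRingEnd ℂ) g * Complex.exp (s * Complex.I) with ha
  have hna : ‖a‖ < 1 := by rw [ha, norm_ce]; exact hg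
  have h1 : HasDerivAt (fun s : ℝ => 1 + (starRingEnd ℂ) g * Complex.exp (s * Complex.I))
      (a * Complex.I) s := by
    have h0 : HasDerivAt (fun s : ℝ => (s : ℂ) * Complex.I) (1 * Complex.I) s :=
      (HasDerivAt.ofReal_comp (hasDerivAt_id s)).mul_const Complex.I
    have := ((h0.cexp).const_mul ((starRingEnd ℂ) g)).const_add 1
    have e : a * Complex.I = (starRingEnd ℂ) g * (Complex.exp (s * Complex.I) * (1 * Complex.I)) := by
      rw [ha]; ring
    rw [e]; exact this
  have h2 := h1.clog_real (slit a hna)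
  have h3 : HasDerivAt (fun s : ℝ => (Complex.log (1 + (starRingEnd ℂ) g *
      Complex.exp (s * Complex.I))).im) (a * Complex.I / (1 + a)).im s :=
    (Complex.imCLM.hasFDerivAt.comp_hasDerivAt s h2)
  have h4 : HasDerivAt (G g) (1 - 2 * (a * Complex.I / (1 + a)).im) s :=
    (hasDerivAt_id s).sub (h3.const_mul 2)
  rw [h4.deriv]
  have hne : (1 + a) ≠ 0 := Complex.slitPlane_ne_zero (slit a hna)
  have hpos : 0 < Complex.normSq (1 + a) := Complex.normSq_pos.2 hne
  have hsq : a.re ^ 2 + a.im ^ 2 < 1 := by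
    have := Complex.sq_norm a
    rw [Complex.normSq_apply] at this
    nlinarith [norm_nonneg a]
  have : (a * Complex.I / (1 + a)).im
      = (a.re * (1 + a.re) + a.im * a.im) / Complex.normSq (1 + a) := by
    rw [Complex.div_im]; simp; ring
  rw [this, sub_nonneg, mul_div_assoc', div_le_one hpos, Complex.normSq_apply]
  simp
  nlinarith

lemma G_exp (g : ℂ) (hg : ‖g‖ < 1) (s : ℝ) :
    Complex.exp (G g s * Complex.I) = (g + Complex.exp (s * Complex.I)) /
      (1 + (starRingEnd ℂ) g * Complex.exp (s * Complex.I)) := by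
  set w := Complex.exp (s * Complex.I) with hw
  have hwn : ‖w‖ = 1 := Complex.norm_exp_ofReal_mul_I s
  set q : ℂ := 1 + (starRingEnd ℂ) g * w with hq
  have hqs : q ∈ Complex.slitPlane := slit _ (by rw [norm_ce g s]; exact hg)
  have hq0 : q ≠ 0 := Complex.slitPlane_ne_zero hqs
  have hlog : Complex.exp ((Complex.log q).im * Complex.I) = q / (‖q‖ : ℂ) := by
    rw [Complex.log_im]
    rw [eq_div_iff (by simpa using hq0), mul_comm]
    exact Complex.norm_mul_exp_arg_mul_I q
  have h1 : (G g s : ℂ) * Complex.I = s * Complex.I - (Complex.log q).im * Complex.I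
      - (Complex.log q).im * Complex.I := by
    unfold G; push_cast; ring
  rw [h1, Complex.exp_sub, Complex.exp_sub, hlog, ← hw]
  have hww : w * (starRingEnd ℂ) w = 1 := by
    rw [Complex.mul_conj, Complex.normSq_eq_norm_sq, hwn]; simp
  have hqq : q * (starRingEnd ℂ) q = (‖q‖ : ℂ)^2 := by
    rw [Complex.mul_conj, Complex.normSq_eq_norm_sq]; simp
  have hcq : w * (starRingEnd ℂ) q = g + w := by
    rw [hq]; simp; linear_combination g * hww
  have hn : (‖q‖ : ℂ) ≠ 0 := by simpa using hq0
  field_simp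
  rw [← hqq, ← hcq]; ring

/-- lift data -/
def Lift (m : ℕ) (h : ℝ → ℂ) : Prop := ∃ φ : ℝ → ℝ, ContDiff ℝ (⊤ : ℕ∞) φ ∧ Monotone φ ∧
  (∃ k : ℕ, k ≤ m ∧ φ 1 = φ 0 + 2 * Real.pi * k) ∧ ∀ y, h y = Complex.exp (φ y * Complex.I)

lemma tail_smul {m : ℕ} (t : ℝ) (v : Fin (m+2) → ℂ) : Fin.tail (t • v) = t • Fin.tail v := rfl
lemma tail_neg {m : ℕ} (v : Fin (m+2) → ℂ) : Fin.tail (-v) = - Fin.tail v := rfl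

lemma ga_neg {m : ℕ} (v : Fin (m+2) → ℂ) : ga (-v) = - ga v := by
  simp [ga, tail_neg, neg_div]

lemma ga_smul {m : ℕ} (t : ℝ) (ht : 0 < t) (v : Fin (m+2) → ℂ) : ga (t • v) = ga v := by
  have ht' : (t : ℂ) ≠ 0 := by exact_mod_cast ht.ne'
  simp only [ga, tail_smul, norm_smul, Pi.smul_apply, Real.norm_of_nonneg ht.le, ← mul_add]
  rw [Complex.real_smul, Complex.ofReal_mul, mul_div_mul_left _ _ ht']

lemma F_neg (m : ℕ) (v : Fin (m+1) → ℂ) (y : ℝ) : F m (-v) y = - F m v y := by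
  induction m with
  | zero => simp [F, neg_div]
  | succ m ih =>
    simp only [F, ga_neg, tail_neg, ih, map_neg]
    rw [← neg_div]; congr 1 <;> ring

lemma F_smul (m : ℕ) (t : ℝ) (ht : 0 < t) (v : Fin (m+1) → ℂ) : F m (t • v) = F m v := by
  funext y
  induction m with
  | zero =>
    have ht' : (t : ℂ) ≠ 0 := by exact_mod_cast ht.ne'
    simp only [F, norm_smul, Pi.smul_apply, Real.norm_of_nonneg ht.le]
    rw [Complex.real_smul, Complex.ofReal_mul, mul_div_mul_left _ _ ht']
  | succ m ih =>
    simp only [F, ga_smul t ht, tail_smul, ih]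

lemma F_zero (m : ℕ) (y : ℝ) : F m 0 y = 0 := by
  have := F_neg m 0 y
  rw [neg_zero] at this
  exact self_eq_neg.1 this

lemma ga_lt {m : ℕ} (v : Fin (m+2) → ℂ) (hv : Fin.tail v ≠ 0) : ‖ga v‖ < 1 := by
  have h : 0 < ‖Fin.tail v‖ := norm_pos_iff.2 hv
  rw [ga, norm_div, Complex.norm_real, Real.norm_of_nonneg (by positivity),
    div_lt_one (by positivity)]
  linarith

lemma tail_zero {m : ℕ} (v : Fin (m+2) → ℂ) (hv : v ≠ 0) (h : Fin.tail v = 0) : v 0 ≠ 0 := by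
  intro h0
  apply hv
  funext i
  refine Fin.cases h0 (fun j => ?_) i
  exact congrFun h j

lemma ga_eq {m : ℕ} (v : Fin (m+2) → ℂ) (hv : v ≠ 0) (h : Fin.tail v = 0) : ‖ga v‖ = 1 := by
  have h0 : 0 < ‖v 0‖ := norm_pos_iff.2 (tail_zero v hv h)
  rw [ga, h, norm_div, Complex.norm_real]
  simp [h0.ne']

lemma F_tail_zero (m : ℕ) (v : Fin (m+2) → ℂ) (h : Fin.tail v = 0) (y : ℝ) :
    F (m+1) v y = ga v := by
  simp [F, h, F_zero]

lemma lift_const (m : ℕ) (c : ℂ) (hc : ‖c‖ = 1) : Lift m (fun _ => c) := by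
  refine ⟨fun _ => c.arg, contDiff_const, monotone_const, ⟨0, by simp, by simp⟩, ?_⟩
  intro y
  have := Complex.norm_mul_exp_arg_mul_I c
  rw [hc] at this
  simpa using this.symm

lemma F_lift (m : ℕ) (v : Fin (m+1) → ℂ) (hv : v ≠ 0) : Lift m (F m v) := by
  induction m with
  | zero =>
    have h0 : v 0 ≠ 0 := by
      intro h; apply hv; funext i; rw [Fin.fin_one_eq_zero i]; exact h
    have : F 0 v = fun _ => v 0 / (‖v 0‖ : ℂ) := rfl
    rw [this]
    apply lift_const
    simp [h0]
  | succ m ih =>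
    by_cases ht : Fin.tail v = 0
    · have : F (m+1) v = fun _ => ga v := by funext y; exact F_tail_zero m v ht y
      rw [this]
      exact lift_const _ _ (ga_eq v hv ht)
    · obtain ⟨φ, h1, h2, ⟨k, hk, h3⟩, h4⟩ := ih (Fin.tail v) ht
      have hg := ga_lt v ht
      refine ⟨fun y => G (ga v) (2 * Real.pi * y + φ y), ?_, ?_, ⟨k + 1, by omega, ?_⟩, ?_⟩
      · exact (G_smooth _ hg).comp ((contDiff_const.mul contDiff_id).add h1)
      · refine (G_mono _ hg).comp ?_
        intro a b hab
        have := h2 hab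
        have := Real.pi_pos
        simp only
        gcongr
      · have he : Complex.exp (((2 * Real.pi * 1 + φ 1 : ℝ) : ℂ) * Complex.I)
            = Complex.exp (((2 * Real.pi * 0 + φ 0 : ℝ) : ℂ) * Complex.I) := by
          rw [Complex.exp_eq_exp_iff_exists_int]
          refine ⟨k + 1, ?_⟩
          rw [h3]; push_cast; ring
        simp only [G, he]
        rw [h3]; push_cast; ring
      · intro y
        rw [G_exp _ hg]
        have : Complex.exp (((2 * Real.pi * y + φ y : ℝ) : ℂ) * Complex.I)
            = ee y * F m (Fin.tail v) y := by
          rw [h4, ee, ← Complex.exp_add]; congr 1; push_cast; ring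
        rw [this]; rfl

lemma lift_norm {m : ℕ} {h : ℝ → ℂ} (H : Lift m h) (y : ℝ) : ‖h y‖ = 1 := by
  obtain ⟨φ, -, -, -, h4⟩ := H
  rw [h4]; exact Complex.norm_exp_ofReal_mul_I _

lemma lift_smooth {m : ℕ} {h : ℝ → ℂ} (H : Lift m h) : ContDiff ℝ (⊤ : ℕ∞) h := by
  obtain ⟨φ, h1, -, -, h4⟩ := H
  have : h = fun y => Complex.exp (φ y * Complex.I) := funext h4
  rw [this]
  have : ContDiff ℝ (⊤ : ℕ∞) (fun s : ℝ => (φ s : ℂ)) := Complex.ofRealCLM.contDiff.comp h1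
  fun_prop

lemma lift_scv {m : ℕ} {h : ℝ → ℂ} (H : Lift m h) : SmoothCircleValued h :=
  ⟨(lift_smooth H).contDiffOn, fun x _ => lift_norm H x⟩

lemma lift_int {m : ℕ} {h : ℝ → ℂ} (H : Lift m h) :
    (∫ x in (0:ℝ)..1, ‖h x‖) + (∫ x in (0:ℝ)..1, ‖derivWithin h (Set.Icc 0 1) x‖)
        ≤ 1 + 2 * Real.pi * m := by
  have hn := lift_norm H
  obtain ⟨φ, h1, h2, ⟨k, hk, h3⟩, h4⟩ := H
  have hd : Differentiable ℝ φ := h1.differentiable (by simp)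
  have e1 : (∫ x in (0:ℝ)..1, ‖h x‖) = 1 := by simp [hn]
  have e2 : (∫ x in (0:ℝ)..1, ‖derivWithin h (Set.Icc 0 1) x‖) = ∫ x in (0:ℝ)..1, deriv φ x := by
    apply intervalIntegral.integral_congr
    intro x hx
    rw [Set.uIcc_of_le zero_le_one] at hx
    have hder : HasDerivAt h (Complex.exp (φ x * Complex.I) * ((deriv φ x : ℝ) * Complex.I)) x := by
      have : h = fun y => Complex.exp (φ y * Complex.I) := funext h4
      rw [this]
      exact ((HasDerivAt.ofReal_comp (hd x).hasDerivAt).mul_const Complex.I).cexp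
    simp only
    rw [hder.hasDerivWithinAt.derivWithin (uniqueDiffOn_Icc zero_lt_one x hx), norm_mul,
      Complex.norm_exp_ofReal_mul_I, norm_mul, Complex.norm_I, Complex.norm_real, one_mul, mul_one,
      Real.norm_of_nonneg h2.deriv_nonneg]
  have e3 : ∫ x in (0:ℝ)..1, deriv φ x = φ 1 - φ 0 := by
    apply intervalIntegral.integral_deriv_eq_sub (fun x _ => hd x)
    exact (h1.continuous_deriv (by simp)).intervalIntegrable _ _
  rw [e1, e2, e3, h3]
  have : (k : ℝ) ≤ m := by exact_mod_cast hk
  have := Real.pi_pos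
  have : 2 * Real.pi * k ≤ 2 * Real.pi * m := by gcongr
  linarith

lemma countable_exp (c : ℂ) : {t : ℝ | Complex.exp (t * Complex.I) = c}.Countable := by
  by_cases h : ∃ t0 : ℝ, Complex.exp (t0 * Complex.I) = c
  · obtain ⟨t0, h0⟩ := h
    refine (Set.countable_range (fun k : ℤ => t0 + k * (2 * Real.pi))).mono ?_
    intro t ht
    have ht' : Complex.exp (t * Complex.I) = c := ht
    rw [← h0, Complex.exp_eq_exp_iff_exists_int] at ht'
    obtain ⟨k, hk⟩ := ht'
    refine ⟨k, ?_⟩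
    have : (t : ℂ) = ((t0 + k * (2 * Real.pi) : ℝ) : ℂ) := by
      apply mul_right_cancel₀ Complex.I_ne_zero
      rw [hk]; push_cast; ring
    exact_mod_cast this.symm
  · convert Set.countable_empty
    ext t
    simp only [Set.mem_ofPred_eq, Set.mem_empty_iff_false, iff_false]
    exact fun ht => h ⟨t, ht⟩

lemma ae_ne {m : ℕ} {h : ℝ → ℂ} (H : Lift m h) (c : ℂ) : ∀ᵐ y, ee y * h y ≠ c := by
  obtain ⟨φ, h1, h2, -, h4⟩ := H
  have hinj : Function.Injective (fun y => 2 * Real.pi * y + φ y) := by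
    apply StrictMono.injective
    intro a b hab
    have := h2 hab.le
    have : 2 * Real.pi * a < 2 * Real.pi * b := by
      have := Real.pi_pos
      gcongr
    simp only; linarith
  have hc : {y : ℝ | ee y * h y = c}.Countable := by
    refine ((countable_exp c).preimage_of_injOn (f := fun y => 2 * Real.pi * y + φ y)
      hinj.injOn).mono ?_
    intro y hy
    have hy' : ee y * h y = c := hy
    change Complex.exp (((2 * Real.pi * y + φ y : ℝ) : ℂ) * Complex.I) = c
    rw [← hy', h4, ee, ← Complex.exp_add]; congr 1; push_cast; ring
  have := hc.ae_notMem (volume : Measure ℝ)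
  filter_upwards [this] with y hy using hy

lemma tail_cont {m : ℕ} : Continuous (fun v : Fin (m+2) → ℂ => Fin.tail v) := by
  unfold Fin.tail; fun_prop

lemma ga_tendsto {m : ℕ} {u : ℕ → Fin (m+2) → ℂ} {v : Fin (m+2) → ℂ} (hv : v ≠ 0)
    (hu : Tendsto u atTop (𝓝 v)) : Tendsto (fun k => ga (u k)) atTop (𝓝 (ga v)) := by
  have h0 : Tendsto (fun k => u k 0) atTop (𝓝 (v 0)) := (tendsto_pi_nhds.1 hu) 0
  have h1 : Tendsto (fun k => Fin.tail (u k)) atTop (𝓝 (Fin.tail v)) :=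
    (tail_cont.tendsto v).comp hu
  have hne : ‖v 0‖ + ‖Fin.tail v‖ ≠ 0 := by
    by_cases ht : Fin.tail v = 0
    · have := norm_pos_iff.2 (tail_zero v hv ht)
      positivity
    · have := norm_pos_iff.2 ht
      positivity
  unfold ga
  refine h0.div ?_ (by exact_mod_cast hne)
  exact (Complex.continuous_ofReal.tendsto _).comp (h0.norm.add h1.norm)

lemma F_conv (m : ℕ) (u : ℕ → Fin (m+1) → ℂ) (v : Fin (m+1) → ℂ) (hv : v ≠ 0)
    (hu : Tendsto u atTop (𝓝 v)) : ∃ σ : ℕ → ℕ, StrictMono σ ∧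
      ∀ᵐ y : ℝ, Tendsto (fun k => F m (u (σ k)) y) atTop (𝓝 (F m v y)) := by
  induction m with
  | zero =>
    refine ⟨id, strictMono_id, Eventually.of_forall fun y => ?_⟩
    have h0' : v 0 ≠ 0 := by
      intro h; apply hv; funext i; rw [Fin.fin_one_eq_zero i]; exact h
    have h0 : Tendsto (fun k => u k 0) atTop (𝓝 (v 0)) := (tendsto_pi_nhds.1 hu) 0
    simp only [F, id]
    exact h0.div ((Complex.continuous_ofReal.tendsto _).comp h0.norm) (by simpa using h0')
  | succ m ih =>
    have h1 : Tendsto (fun k => Fin.tail (u k)) atTop (𝓝 (Fin.tail v)) :=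
      (tail_cont.tendsto v).comp hu
    have hga := ga_tendsto hv hu
    by_cases ht : Fin.tail v = 0
    · by_cases hfr : ∃ᶠ k in atTop, Fin.tail (u k) = 0
      · obtain ⟨σ, hσ, hσ'⟩ := extraction_of_frequently_atTop hfr
        refine ⟨σ, hσ, Eventually.of_forall fun y => ?_⟩
        simp only [F_tail_zero m _ ht, F_tail_zero m _ (hσ' _)]
        exact hga.comp hσ.tendsto_atTop
      · rw [not_frequently] at hfr
        set d : ℕ → Fin (m+1) → ℂ := fun k => ‖Fin.tail (u k)‖⁻¹ • Fin.tail (u k) with hd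
        have hdn : ∀ k, Fin.tail (u k) ≠ 0 → ‖d k‖ = 1 := by
          intro k hk
          simp only [hd, norm_smul, norm_inv, norm_norm]
          exact inv_mul_cancel₀ (norm_ne_zero_iff.2 hk)
        have hdF : ∀ k, Fin.tail (u k) ≠ 0 → F m (d k) = F m (Fin.tail (u k)) := by
          intro k hk
          exact F_smul m _ (inv_pos.2 (norm_pos_iff.2 hk)) _
        have hfr2 : ∃ᶠ k in atTop, d k ∈ Metric.sphere (0 : Fin (m+1) → ℂ) 1 := by
          apply Eventually.frequently
          filter_upwards [hfr] with k hk
          simpa using hdn k hk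
        obtain ⟨w, hw, σ, hσ, hσw⟩ := (isCompact_sphere (0 : Fin (m+1) → ℂ) 1).tendsto_subseq' hfr2
        have hw0 : w ≠ 0 := by
          rintro rfl
          simp at hw
        obtain ⟨σ', hσ', hae⟩ := ih (d ∘ σ) w hw0 hσw
        refine ⟨σ ∘ σ', hσ.comp hσ', ?_⟩
        have hmono := (hσ.comp hσ').tendsto_atTop
        filter_upwards [hae, ae_ne (F_lift m w hw0) (- ga v)] with y hy1 hy2
        rw [F_tail_zero m _ ht]
        have hg1 := ga_eq v hv ht
        have hgg : ga v * (starRingEnd ℂ) (ga v) = 1 := by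
          rw [Complex.mul_conj, Complex.normSq_eq_norm_sq, hg1]; simp
        have hnum : ga v + ee y * F m w y = ga v * (1 + (starRingEnd ℂ) (ga v) * (ee y * F m w y)) := by
          linear_combination -(ee y * F m w y) * hgg
        have hden : 1 + (starRingEnd ℂ) (ga v) * (ee y * F m w y) ≠ 0 := by
          intro h0
          rw [h0, mul_zero] at hnum
          apply hy2
          linear_combination hnum
        have hlim : Tendsto (fun k => (ga (u (σ (σ' k))) + ee y * F m (d (σ (σ' k))) y) /
            (1 + (starRingEnd ℂ) (ga (u (σ (σ' k)))) * (ee y * F m (d (σ (σ' k))) y))) atTop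
            (𝓝 ((ga v + ee y * F m w y) / (1 + (starRingEnd ℂ) (ga v) * (ee y * F m w y)))) := by
          have g1 := hga.comp hmono
          have g2 : Tendsto (fun k => ee y * F m (d (σ (σ' k))) y) atTop (𝓝 (ee y * F m w y)) :=
            tendsto_const_nhds.mul hy1
          have g3 : Tendsto (fun k => (starRingEnd ℂ) (ga (u (σ (σ' k))))) atTop
            (𝓝 ((starRingEnd ℂ) (ga v))) := (Complex.continuous_conj.tendsto _).comp g1
          exact (g1.add g2).div (tendsto_const_nhds.add (g3.mul g2)) hden
        rw [hnum, mul_div_assoc, div_self hden, mul_one] at hlim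
        refine hlim.congr' ?_
        filter_upwards [hmono.eventually hfr] with k hk
        have hk' := hdF (σ (σ' k)) hk
        rw [hk']; rfl
    · obtain ⟨σ, hσ, hae⟩ := ih _ _ ht h1
      refine ⟨σ, hσ, ?_⟩
      filter_upwards [hae] with y hy
      have g1 := hga.comp hσ.tendsto_atTop
      have g2 : Tendsto (fun k => ee y * F m (Fin.tail (u (σ k))) y) atTop
          (𝓝 (ee y * F m (Fin.tail v) y)) := tendsto_const_nhds.mul hy
      have g3 : Tendsto (fun k => (starRingEnd ℂ) (ga (u (σ k)))) atTop
        (𝓝 ((starRingEnd ℂ) (ga v))) := (Complex.continuous_conj.tendsto _).comp g1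
      refine (g1.add g2).div (tendsto_const_nhds.add (g3.mul g2)) ?_
      apply Complex.slitPlane_ne_zero
      apply slit
      rw [norm_mul, norm_mul, lift_norm (F_lift m _ ht) y, ee, Complex.norm_exp_ofReal_mul_I]
      simpa using ga_lt v ht

lemma L1_conv (m : ℕ) (u : ℕ → Fin (m+1) → ℂ) (v : Fin (m+1) → ℂ) (hv : v ≠ 0)
    (hu : Tendsto u atTop (𝓝 v)) : ∃ σ : ℕ → ℕ, StrictMono σ ∧
      Tendsto (fun k => ∫ x in (0:ℝ)..1, ‖F m (u (σ k)) x - F m v x‖) atTop (𝓝 0) := by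
  obtain ⟨σ, hσ, hae⟩ := F_conv m u v hv hu
  refine ⟨σ, hσ, ?_⟩
  have hev : ∀ᶠ k in atTop, u (σ k) ≠ 0 := (hu.comp hσ.tendsto_atTop).eventually_ne hv
  have h0 : (∫ x in (0:ℝ)..1, (0:ℝ)) = 0 := by simp
  suffices hs : Tendsto (fun k => ∫ x in (0:ℝ)..1, ‖F m (u (σ k)) x - F m v x‖) atTop
      (𝓝 (∫ x in (0:ℝ)..1, (0:ℝ))) by rwa [h0] at hs
  apply intervalIntegral.tendsto_integral_filter_of_dominated_convergence (fun _ => (2:ℝ))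
  · filter_upwards [hev] with k hk
    have c1 := (lift_smooth (F_lift m _ hk)).continuous
    have c2 := (lift_smooth (F_lift m _ hv)).continuous
    exact (c1.sub c2).norm.aestronglyMeasurable
  · filter_upwards [hev] with k hk
    refine Eventually.of_forall fun x _ => ?_
    rw [norm_norm]
    refine (norm_sub_le _ _).trans ?_
    rw [lift_norm (F_lift m _ hk), lift_norm (F_lift m _ hv)]; norm_num
  · exact intervalIntegrable_const
  · filter_upwards [hae] with x hx _
    have := (hx.sub_const (F m v x)).norm
    simpa using this

lemma exists_inj (n : ℕ) : ∃ L : (Fin (n+1) → ℝ) →ₗ[ℝ] (Fin (n/2+1) → ℂ), Function.Injective L := by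
  have h : Module.finrank ℝ (Fin (n+1) → ℝ) ≤ Module.finrank ℝ (Fin (n/2+1) → ℂ) := by
    simp [Module.finrank_pi_fintype, Complex.finrank_real_complex]
    omega
  have h' : Module.rank ℝ (Fin (n+1) → ℝ) ≤ Module.rank ℝ (Fin (n/2+1) → ℂ) := by
    rw [← Module.finrank_eq_rank, ← Module.finrank_eq_rank]
    exact_mod_cast h
  exact (rank_le_iff_exists_linearMap).1 h'

end LL

/-- **Nonlinear Lazarev–Lieb theorem.** If `ψ : C^∞([0,1]; S¹) → ℝⁿ` is continuous with
respect to the `L¹`-norm and odd (`ψ(-h) = -ψ(h)`), then `ψ` has a zero `h` with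
`‖h‖_{W^{1,1}} ≤ 1 + π n`. -/
theorem nonlinear_lazarev_lieb (n : ℕ) (ψ : (ℝ → ℂ) → EuclideanSpace ℝ (Fin n))
    (hcont : ∀ h : ℝ → ℂ, SmoothCircleValued h → ∀ ε > 0, ∃ δ > 0,
      ∀ h' : ℝ → ℂ, SmoothCircleValued h' →
        (∫ x in (0:ℝ)..1, ‖h' x - h x‖) < δ → ‖ψ h' - ψ h‖ < ε)
    (hodd : ∀ h : ℝ → ℂ, SmoothCircleValued h → ψ (fun x => -h x) = -ψ h) :
    ∃ h : ℝ → ℂ, SmoothCircleValued h ∧ ψ h = 0 ∧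
      (∫ x in (0:ℝ)..1, ‖h x‖) + (∫ x in (0:ℝ)..1, ‖derivWithin h (Set.Icc 0 1) x‖)
        ≤ 1 + Real.pi * n := by
  obtain ⟨L, hL⟩ := LL.exists_inj n
  have hL0 : ∀ x, x ≠ 0 → L x ≠ 0 := fun x hx h => hx (hL (by rw [h, map_zero]))
  have hLc : Continuous L := L.continuous_of_finiteDimensional
  obtain ⟨x, hx, hfx⟩ := BU.borsuk_ulam n (fun x => (ψ (LL.F (n/2) (L x))).ofLp) (by
    intro x hx
    have hx : x ≠ 0 := hx
    apply ContinuousAt.continuousWithinAt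
    refine (PiLp.continuous_ofLp 2 _).continuousAt.comp (f := fun x => ψ (LL.F (n/2) (L x))) ?_
    apply Filter.tendsto_of_subseq_tendsto
    intro u hu
    have hu' : Filter.Tendsto (fun k => L (u k)) Filter.atTop (nhds (L x)) :=
      (hLc.tendsto x).comp hu
    obtain ⟨σ, hσ, hlim⟩ := LL.L1_conv (n/2) _ _ (hL0 x hx) hu'
    refine ⟨σ, ?_⟩
    rw [Metric.tendsto_atTop']
    intro ε hε
    obtain ⟨δ, hδ, H⟩ := hcont _ (LL.lift_scv (LL.F_lift _ _ (hL0 x hx))) ε hε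
    have hev : ∀ᶠ k in Filter.atTop, L (u (σ k)) ≠ 0 :=
      (hu'.comp hσ.tendsto_atTop).eventually_ne (hL0 x hx)
    have := hev.and (hlim.eventually (gt_mem_nhds hδ))
    obtain ⟨N, hN⟩ := Filter.eventually_atTop.1 this
    refine ⟨N, fun k hk => ?_⟩
    obtain ⟨a1, a2⟩ := hN k hk.le
    rw [dist_eq_norm]
    exact H _ (LL.lift_scv (LL.F_lift _ _ a1)) a2) (by
    intro x hx
    have : LL.F (n/2) (L (-x)) = fun y => - LL.F (n/2) (L x) y := by
      funext y; rw [map_neg, LL.F_neg]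
    simp only [this]
    rw [hodd _ (LL.lift_scv (LL.F_lift _ _ (hL0 x hx)))]
    rfl)
  have hl := LL.F_lift (n/2) _ (hL0 x hx)
  refine ⟨LL.F (n/2) (L x), LL.lift_scv hl, ?_, (LL.lift_int hl).trans ?_⟩
  · ext i; exact congrFun hfx i
  · have h1 : (2 : ℝ) * ((n/2 : ℕ) : ℝ) ≤ n := by exact_mod_cast Nat.mul_div_le n 2
    nlinarith [Real.pi_pos]
end
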